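/- Fix n, d ∈ ℕ, 1 < p < ∞, x ∈ ℝ^n, and smooth vector fields X_0, X_1, …, X_d : ℝ^n → ℝ^n that are bounded and have bounded first and second derivatives. Let F : L^p([0,1], ℝ^d) → ℝ^n be the endpoint map F(u) = γ_u(1), where γ_u is the trajectory of u starting at x (F is Fréchet differentiable). Let J(u) = Σ_{i=1}^d ∫_0^1 |u_i(t)|^p dt, whose Fréchet differential at u is d_uJ(h) = Σ_{i=1}^d ∫_0^1 p·u_i|u_i|^{p−2} h_i dt. Let y ∈ ℝ^n be a regular value of F, i.e., for every u with F(u) = y the differential d_uF : L^p([0,1], ℝ^d) → ℝ^n is surjective. Suppose {u_k}_{k∈ℕ} is a sequence with F(u_k) = y for all k, the norms ‖u_k‖_p are bounded, and sup{ |d_{u_k}J(h)| : h ∈ ker d_{u_k}F, ‖h‖_p ≤ 1 } → 0 as k → ∞. Then {u_k} has a subsequence converging in the L^p norm. -/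

import Mathlib

open MeasureTheory Set Filter Topology

noncomputable section

/-- Trajectory on `[0,1]` of a control `u` starting at `x` for the affine control
system `γ' = X₀(γ) + Σᵢ uᵢ Xᵢ(γ)`. -/
def IsTrajectory {n d : ℕ}
    (X0 : EuclideanSpace ℝ (Fin n) → EuclideanSpace ℝ (Fin n))
    (X : Fin d → EuclideanSpace ℝ (Fin n) → EuclideanSpace ℝ (Fin n))
    (x : EuclideanSpace ℝ (Fin n))
    (u : ℝ → EuclideanSpace ℝ (Fin d))
    (γ : ℝ → EuclideanSpace ℝ (Fin n)) : Prop :=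
  ContinuousOn γ (Set.Icc 0 1) ∧
    ∀ t ∈ Set.Icc (0:ℝ) 1,
      γ t = x + ∫ s in (0:ℝ)..t, (X0 (γ s) + ∑ i, u s i • X i (γ s))

noncomputable section

abbrev LL (d : ℕ) (p : ℝ) := Lp (EuclideanSpace ℝ (Fin d)) (ENNReal.ofReal p)
        (volume.restrict (Set.Icc (0:ℝ) 1))

lemma intOn_interval {E : Type*} [NormedAddCommGroup E] {f : ℝ → E}
    (hf : Integrable f (volume.restrict (Icc (0:ℝ) 1))) {a b : ℝ} (ha : a ∈ Icc (0:ℝ) 1)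
    (hb : b ∈ Icc (0:ℝ) 1) : IntervalIntegrable f volume a b := by
  rw [intervalIntegrable_iff]
  refine IntegrableOn.mono_set (t := Icc 0 1) hf ?_
  intro x hx
  rw [uIoc, mem_Ioc] at hx
  exact ⟨(le_min ha.1 hb.1).trans hx.1.le, hx.2.trans (max_le ha.2 hb.2)⟩

lemma gron (a φ : ℝ → ℝ) (ha : Integrable a (volume.restrict (Icc (0:ℝ) 1)))
    (ha0 : ∀ t, 0 ≤ a t) (hφ : ContinuousOn φ (Icc 0 1)) (hφ0 : ∀ t, 0 ≤ φ t)
    (R : ℝ) (N : ℕ) (hN0 : 0 < N)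
    (hN : ∀ s ∈ Icc (0:ℝ) 1, ∀ t ∈ Icc (0:ℝ) 1, s ≤ t → t - s ≤ 1 / N → ∫ r in s..t, a r ≤ 1/2)
    (h : ∀ t ∈ Icc (0:ℝ) 1, φ t ≤ R + ∫ r in (0:ℝ)..t, a r * φ r) :
    ∀ t ∈ Icc (0:ℝ) 1, φ t ≤ 2 ^ N * R := by
  have haInt : Integrable (fun r => a r * φ r) (volume.restrict (Icc (0:ℝ) 1)) := by
    obtain ⟨C, hC⟩ := isCompact_Icc.exists_bound_of_continuousOn hφ
    refine Integrable.mul_bdd ha (hφ.aestronglyMeasurable measurableSet_Icc) (c := C) ?_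
    exact (ae_restrict_mem measurableSet_Icc).mono hC
  have h0 : (0:ℝ) ∈ Icc (0:ℝ) 1 := ⟨le_rfl, zero_le_one⟩
  have h1 : (1:ℝ) ∈ Icc (0:ℝ) 1 := ⟨zero_le_one, le_rfl⟩
  set ψ : ℝ → ℝ := fun t => R + ∫ r in (0:ℝ)..t, a r * φ r with hψ
  have hadd : ∀ s ∈ Icc (0:ℝ) 1, ∀ t ∈ Icc (0:ℝ) 1, ψ t = ψ s + ∫ r in s..t, a r * φ r := by
    intro s hs t ht
    simp only [hψ]
    rw [add_assoc, intervalIntegral.integral_add_adjacent_intervals (intOn_interval haInt h0 hs)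
      (intOn_interval haInt hs ht)]
  have hstep : ∀ s ∈ Icc (0:ℝ) 1, ∀ t ∈ Icc (0:ℝ) 1, s ≤ t → t - s ≤ 1 / N → ψ t ≤ 2 * ψ s := by
    intro s hs t ht hst hd
    have hsub : Icc s t ⊆ Icc (0:ℝ) 1 := Icc_subset_Icc hs.1 ht.2
    obtain ⟨τ, hτ, hmax⟩ := isCompact_Icc.exists_isMaxOn (nonempty_Icc.2 hst) (hφ.mono hsub)
    have key : ∀ r ∈ Icc s t, ψ r ≤ ψ s + φ τ / 2 := by
      intro r hr
      rw [hadd s hs r (hsub hr)]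
      have h3 : ∫ q in s..r, a q * φ q ≤ ∫ q in s..r, a q * φ τ := by
        refine intervalIntegral.integral_mono_on hr.1 (intOn_interval haInt hs (hsub hr))
          ((intOn_interval ha hs (hsub hr)).mul_const _) ?_
        intro q hq
        exact mul_le_mul_of_nonneg_left (hmax ⟨hq.1, hq.2.trans hr.2⟩) (ha0 q)
      rw [intervalIntegral.integral_mul_const] at h3
      have h4 := hN s hs r (hsub hr) hr.1 (by linarith [hr.2])
      have := mul_le_mul_of_nonneg_right h4 (hφ0 τ)
      linarith
    have h5 := h τ (hsub hτ)
    have h6 := key τ hτ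
    have h7 := key t ⟨hst, le_rfl⟩
    have h8 : φ τ ≤ ψ τ := h5
    linarith
  have hN' : (0:ℝ) < N := by exact_mod_cast hN0
  have hind : ∀ j : ℕ, j ≤ N → ψ (j / N) ≤ 2 ^ j * R := by
    intro j
    induction j with
    | zero => intro _; simp [hψ]
    | succ j ih =>
      intro hj
      have hm : ∀ i : ℕ, i ≤ N → (i / N : ℝ) ∈ Icc (0:ℝ) 1 := by
        intro i hi
        refine ⟨by positivity, ?_⟩
        rw [div_le_one hN']; exact_mod_cast hi
      have := hstep (j / N) (hm j (by omega)) ((j+1 : ℕ) / N) (hm _ hj)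
        (by gcongr; omega) (by push_cast; rw [← sub_div]; simp)
      have := ih (by omega)
      rw [pow_succ]
      linarith
  intro t ht
  have h9 := hind N le_rfl
  rw [div_self hN'.ne'] at h9
  have h10 := hadd t ht 1 h1
  have h11 : 0 ≤ ∫ r in t..1, a r * φ r :=
    intervalIntegral.integral_nonneg ht.2 (fun r _ => mul_nonneg (ha0 r) (hφ0 r))
  have h12 : φ t ≤ ψ t := h t ht
  linarith

lemma holder_int {d : ℕ} {p : ℝ} (hp : 1 < p) [Fact (1 ≤ ENNReal.ofReal p)] (v : LL d p)
    {a b : ℝ} (ha : 0 ≤ a) (hab : a ≤ b) (hb : b ≤ 1) :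
    ∫ s in a..b, ‖v s‖ ≤ (b - a) ^ (1 - 1 / p) * ‖v‖ := by
  have hp0 : 0 < p := by linarith
  have hm := Lp.memLp v
  have hsub : Ioc a b ⊆ Icc (0:ℝ) 1 := fun x hx => ⟨ha.trans hx.1.le, hx.2.trans hb⟩
  have hle : volume.restrict (Ioc a b) ≤ volume.restrict (Icc (0:ℝ) 1) :=
    Measure.restrict_mono_set _ hsub
  have hm2 := hm.mono_measure hle
  rw [intervalIntegral.integral_of_le hab, integral_norm_eq_lintegral_enorm hm2.1,
    ← eLpNorm_one_eq_lintegral_enorm]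
  have h1 := eLpNorm_le_eLpNorm_mul_rpow_measure_univ (μ := volume.restrict (Ioc a b))
    (p := 1) (q := ENNReal.ofReal p) (by simpa using hp.le) hm2.1
  have h2 : eLpNorm v (ENNReal.ofReal p) (volume.restrict (Ioc a b)) ≤ ENNReal.ofReal ‖v‖ := by
    rw [Lp.norm_def, ENNReal.ofReal_toReal hm.2.ne]
    exact eLpNorm_mono_measure _ hle
  have h3 : (volume.restrict (Ioc a b) univ) ^ (1 / (1:ENNReal).toReal - 1 / (ENNReal.ofReal p).toReal)
      = ENNReal.ofReal ((b - a) ^ (1 - 1 / p)) := by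
    rw [Measure.restrict_apply_univ, Real.volume_Ioc, ENNReal.toReal_ofReal hp0.le,
      ENNReal.toReal_one, div_one, ENNReal.ofReal_rpow_of_nonneg (by linarith)]
    rw [sub_nonneg, div_le_one hp0]; exact hp.le
  rw [h3] at h1
  have h4 := h1.trans (mul_le_mul_left h2 _)
  rw [← ENNReal.ofReal_mul (norm_nonneg _)] at h4
  have h5 := ENNReal.toReal_mono ENNReal.ofReal_ne_top h4
  rw [ENNReal.toReal_ofReal (by have : 0 ≤ b - a := by linarith
                                positivity)] at h5
  linarith

lemma LL_int {d : ℕ} {p : ℝ} [Fact (1 ≤ ENNReal.ofReal p)] (v : LL d p) :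
    Integrable v (volume.restrict (Icc (0:ℝ) 1)) :=
  (Lp.memLp v).integrable (Fact.out)

lemma L1_le {d : ℕ} {p : ℝ} (hp : 1 < p) [Fact (1 ≤ ENNReal.ofReal p)] (v : LL d p)
    {t : ℝ} (ht : t ∈ Icc (0:ℝ) 1) :
    ∫ s in (0:ℝ)..t, ‖v s‖ ≤ ‖v‖ := by
  have := holder_int hp v le_rfl ht.1 ht.2
  have h2 : (t - 0) ^ (1 - 1 / p) ≤ 1 := by
    apply Real.rpow_le_one (by linarith [ht.1]) (by linarith [ht.2])
    rw [sub_nonneg, div_le_one (by linarith)]; exact hp.le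
  nlinarith [norm_nonneg v]

/-- uniform Gronwall -/
lemma gron_unif {d : ℕ} {p : ℝ} (hp : 1 < p) [Fact (1 ≤ ENNReal.ofReal p)] (L C : ℝ) (hL : 0 ≤ L)
    (hC : 0 ≤ C) : ∃ G : ℝ, 0 ≤ G ∧ ∀ v : LL d p, ‖v‖ ≤ C → ∀ (φ : ℝ → ℝ) (R : ℝ),
      ContinuousOn φ (Icc 0 1) → (∀ t, 0 ≤ φ t) →
      (∀ t ∈ Icc (0:ℝ) 1, φ t ≤ R + ∫ r in (0:ℝ)..t, (L * (1 + ‖v r‖)) * φ r) →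
      ∀ t ∈ Icc (0:ℝ) 1, φ t ≤ G * R := by
  have hα : 0 < 1 - 1 / p := by
    rw [sub_pos, div_lt_one (by linarith)]; exact hp
  have ht : Tendsto (fun N : ℕ => L * (1 / (N:ℝ) + (1 / (N:ℝ)) ^ (1 - 1/p) * C)) atTop (𝓝 (L * (0 + 0 * C))) := by
    have h1 : Tendsto (fun N : ℕ => 1 / (N:ℝ)) atTop (𝓝 0) := tendsto_one_div_atTop_nhds_zero_nat
    have h2 : Tendsto (fun N : ℕ => (1 / (N:ℝ)) ^ (1 - 1/p)) atTop (𝓝 0) := by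
      have := h1.rpow_const (p := 1 - 1/p) (Or.inr hα.le)
      rwa [Real.zero_rpow hα.ne'] at this
    exact (h1.add (h2.mul_const C)).const_mul L
  have hev := (ht.eventually_lt_const (u := 1/2) (by norm_num)).and (eventually_gt_atTop 0)
  obtain ⟨N, hN, hN0⟩ := hev.exists
  refine ⟨2 ^ N, by positivity, ?_⟩
  intro v hv φ R hφ hφ0 h
  have hvi := (LL_int v).norm
  have hai : Integrable (fun r => L * (1 + ‖v r‖)) (volume.restrict (Icc (0:ℝ) 1)) :=
    ((integrable_const 1).add hvi).const_mul L
  refine gron _ φ hai (fun t => by positivity) hφ hφ0 R N hN0 ?_ h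
  intro s hs t ht hst hd
  have h1 := holder_int hp v hs.1 hst ht.2
  rw [intervalIntegral.integral_const_mul, intervalIntegral.integral_add (by simp) (intOn_interval hvi hs ht)]
  simp only [intervalIntegral.integral_const, smul_eq_mul, mul_one]
  refine le_trans ?_ hN.le
  have h2 : (t - s) ^ (1 - 1/p) ≤ (1 / (N:ℝ)) ^ (1 - 1/p) :=
    Real.rpow_le_rpow (by linarith) hd hα.le
  have h3 : (t - s) ^ (1 - 1/p) * ‖v‖ ≤ (1 / (N:ℝ)) ^ (1 - 1/p) * C :=
    mul_le_mul h2 hv (norm_nonneg _) (by positivity)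
  gcongr
  linarith

/-- step lemma -/
lemma step_est {n d : ℕ} {p : ℝ} (hp : 1 < p) [Fact (1 ≤ ENNReal.ofReal p)] (v : LL d p)
    (A : ℝ → (EuclideanSpace ℝ (Fin d) →L[ℝ] EuclideanSpace ℝ (Fin n)))
    (M ω δ : ℝ) (hω : 0 ≤ ω) (N : ℕ) (hN : 0 < N) (hA : ContinuousOn A (Icc 0 1))
    (hM : ∀ t, ‖A t‖ ≤ M)
    (hAω : ∀ s ∈ Icc (0:ℝ) 1, ∀ t ∈ Icc (0:ℝ) 1, s ≤ t → t - s ≤ 1 / N → ‖A t - A s‖ ≤ ω)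
    (hδ : ∀ s ∈ Icc (0:ℝ) 1, ∀ t ∈ Icc (0:ℝ) 1, ‖∫ r in s..t, v r‖ ≤ δ) :
    ∀ t ∈ Icc (0:ℝ) 1, ‖∫ r in (0:ℝ)..t, A r (v r)‖ ≤ N * (M * δ) + ω * ‖v‖ := by
  intro t ht
  have hN' : (0:ℝ) < N := by exact_mod_cast hN
  have hvi := LL_int v
  have hAv : Integrable (fun r => A r (v r)) (volume.restrict (Icc (0:ℝ) 1)) := by
    refine Integrable.mono' (hvi.norm.const_mul M) ?_ ?_
    · exact (ContinuousLinearMap.id ℝ _).aestronglyMeasurable_comp₂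
        (hA.aestronglyMeasurable measurableSet_Icc) hvi.1
    · exact ae_of_all _ fun r => (A r).le_of_opNorm_le (hM r) _
  have hm : ∀ i : ℕ, i ≤ N → (t * i / N : ℝ) ∈ Icc (0:ℝ) 1 := by
    intro i hi
    have := ht.1
    refine ⟨by positivity, ?_⟩
    rw [div_le_one hN']
    have : (i:ℝ) ≤ N := by exact_mod_cast hi
    nlinarith [ht.2, (Nat.cast_nonneg i : (0:ℝ) ≤ i)]
  have hsum : ∀ {G : Type} [NormedAddCommGroup G] [NormedSpace ℝ G] (f : ℝ → G),
      Integrable f (volume.restrict (Icc (0:ℝ) 1)) →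
      ∑ j ∈ Finset.range N, ∫ r in (t * j / N)..(t * (j+1:ℕ) / N), f r = ∫ r in (0:ℝ)..t, f r := by
    intro G _ _ f hf
    have := intervalIntegral.sum_integral_adjacent_intervals (a := fun j : ℕ => t * j / N) (n := N)
      (f := f) (μ := volume) (fun k hk => intOn_interval hf (hm k hk.le) (hm (k+1) hk))
    rw [this]
    congr 1
    · simp
    · field_simp
  rw [← hsum _ hAv]
  have hone : ∀ j ∈ Finset.range N, ‖∫ r in (t * j / N)..(t * (j+1:ℕ) / N), A r (v r)‖
      ≤ M * δ + ω * ∫ r in (t * j / N)..(t * (j+1:ℕ) / N), ‖v r‖ := by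
    intro j hj
    rw [Finset.mem_range] at hj
    set a := t * j / N with hadef
    set b := t * (j+1:ℕ) / N with hbdef
    have ha := hm j hj.le
    have hb := hm (j+1) hj
    have hba : b - a = t / N := by rw [hadef, hbdef]; push_cast; field_simp; ring
    have htN : 0 ≤ t / N := div_nonneg ht.1 hN'.le
    have hab : a ≤ b := by linarith
    have hbaN : b - a ≤ 1 / N := by rw [hba]; gcongr; exact ht.2
    have i1 := intOn_interval hvi ha hb
    have i2 := intOn_interval hAv ha hb
    have i3 : IntervalIntegrable (fun r => A a (v r)) volume a b :=
      intOn_interval ((A a).integrable_comp hvi) ha hb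
    have e : ∫ r in a..b, A r (v r) = A a (∫ r in a..b, v r) + ∫ r in a..b, (A r (v r) - A a (v r)) := by
      rw [intervalIntegral.integral_sub i2 i3, (A a).intervalIntegral_comp_comm i1]
      abel
    rw [e]
    refine (norm_add_le _ _).trans (add_le_add ?_ ?_)
    · exact ((A a).le_of_opNorm_le (hM a) _).trans
        (mul_le_mul_of_nonneg_left (hδ a ha b hb) ((norm_nonneg _).trans (hM a)))
    · rw [← intervalIntegral.integral_const_mul]
      refine intervalIntegral.norm_integral_le_of_norm_le hab ?_ (i1.norm.const_mul ω)
      refine ae_of_all _ fun r hr => ?_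
      have : A r (v r) - A a (v r) = (A r - A a) (v r) := rfl
      rw [this]
      refine (A r - A a).le_of_opNorm_le (hAω a ha r ⟨?_, ?_⟩ hr.1.le ?_) _
      · exact ha.1.trans hr.1.le
      · exact hr.2.trans hb.2
      · linarith [hr.2]
  refine (norm_sum_le _ _).trans ((Finset.sum_le_sum hone).trans ?_)
  rw [Finset.sum_add_distrib, ← Finset.mul_sum _ _ ω, hsum _ hvi.norm]
  simp only [Finset.sum_const, Finset.card_range, nsmul_eq_mul]
  have := L1_le hp v ht
  gcongr

end

noncomputable section

/-- quantitative bounds -/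
structure SysB {E G : Type*} [NormedAddCommGroup E] [NormedSpace ℝ E]
    [NormedAddCommGroup G] [NormedSpace ℝ G] (f : E → G) (L : ℝ) : Prop where
  L0 : 0 ≤ L
  c : Continuous f
  b : ∀ z, ‖f z‖ ≤ L
  l : ∀ z z', ‖f z - f z'‖ ≤ L * ‖z - z'‖
  s : ∀ z0 z1 z2, ‖f z2 - (2:ℝ) • f z1 + f z0‖ ≤
    L * (‖z2 - (2:ℝ) • z1 + z0‖ + ‖z2 - z1‖ ^ 2 + ‖z1 - z0‖ ^ 2)

lemma SysB.mono {E G : Type*} [NormedAddCommGroup E] [NormedSpace ℝ E]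
    [NormedAddCommGroup G] [NormedSpace ℝ G] {f : E → G} {L L' : ℝ} (h : SysB f L) (hL : L ≤ L') :
    SysB f L' := by
  refine ⟨h.L0.trans hL, h.c, fun z => (h.b z).trans hL, fun z z' => (h.l z z').trans (by gcongr),
    fun z0 z1 z2 => (h.s z0 z1 z2).trans (by gcongr)⟩

lemma SysB_of_smooth {E G : Type*} [NormedAddCommGroup E] [NormedSpace ℝ E]
    [NormedAddCommGroup G] [NormedSpace ℝ G] {f : E → G} (hf : ContDiff ℝ (⊤ : ℕ∞) f) {M : ℝ}
    (h0 : ∀ z, ‖f z‖ ≤ M) (h1 : ∀ z, ‖fderiv ℝ f z‖ ≤ M)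
    (h2 : ∀ z, ‖fderiv ℝ (fderiv ℝ f) z‖ ≤ M) : SysB f M := by
  have hM : 0 ≤ M := (norm_nonneg _).trans (h0 0)
  have hd : Differentiable ℝ f := hf.differentiable (by simp)
  have hf1 : ContDiff ℝ (⊤ : ℕ∞) (fderiv ℝ f) := hf.fderiv_right (by simp)
  have hd1 : Differentiable ℝ (fderiv ℝ f) := hf1.differentiable (by simp)
  have hl1 : ∀ z z', ‖fderiv ℝ f z - fderiv ℝ f z'‖ ≤ M * ‖z - z'‖ := fun z z' =>
    convex_univ.norm_image_sub_le_of_norm_fderiv_le (fun x _ => hd1 x) (fun x _ => h2 x)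
      (mem_univ z') (mem_univ z)
  have ht : ∀ z z', ‖f z' - f z - fderiv ℝ f z (z' - z)‖ ≤ M * ‖z' - z‖ ^ 2 := by
    intro z z'
    have := (convex_segment z z').norm_image_sub_le_of_norm_fderiv_le' (𝕜 := ℝ) (f := f)
      (φ := fderiv ℝ f z) (C := M * ‖z' - z‖) (fun x _ => hd x) (fun x hx => ?_)
      (left_mem_segment ℝ z z') (right_mem_segment ℝ z z')
    · rw [pow_two, ← mul_assoc]; exact this
    · refine (hl1 x z).trans ?_
      gcongr
      rw [← dist_eq_norm, ← dist_eq_norm, dist_comm x z, dist_comm z' z]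
      have := dist_add_dist_of_mem_segment hx
      linarith [dist_nonneg (x := x) (y := z')]
  refine ⟨hM, hf.continuous, h0, fun z z' =>
    convex_univ.norm_image_sub_le_of_norm_fderiv_le (fun x _ => hd x) (fun x _ => h1 x)
      (mem_univ z') (mem_univ z), ?_⟩
  intro z0 z1 z2
  have e : f z2 - (2:ℝ) • f z1 + f z0 = fderiv ℝ f z1 (z2 - (2:ℝ) • z1 + z0) +
    (f z2 - f z1 - fderiv ℝ f z1 (z2 - z1)) + (f z0 - f z1 - fderiv ℝ f z1 (z0 - z1)) := by
    simp only [map_add, map_sub, map_smul]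
    module
  rw [e]
  have a1 := (fderiv ℝ f z1).le_of_opNorm_le (h1 z1) (z2 - (2:ℝ) • z1 + z0)
  have a2 := ht z1 z2
  have a3 := ht z1 z0
  rw [norm_sub_rev z0 z1] at a3
  refine (norm_add₃_le).trans ?_
  linarith

/-- The operator `v ↦ ∑ vᵢ Xᵢ(z)`. -/
def Bop {n d : ℕ} (X : Fin d → EuclideanSpace ℝ (Fin n) → EuclideanSpace ℝ (Fin n))
    (z : EuclideanSpace ℝ (Fin n)) : EuclideanSpace ℝ (Fin d) →L[ℝ] EuclideanSpace ℝ (Fin n) :=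
  ∑ i, (EuclideanSpace.proj i : EuclideanSpace ℝ (Fin d) →L[ℝ] ℝ).smulRight (X i z)

lemma Bop_apply {n d : ℕ} (X : Fin d → EuclideanSpace ℝ (Fin n) → EuclideanSpace ℝ (Fin n))
    (z : EuclideanSpace ℝ (Fin n)) (v : EuclideanSpace ℝ (Fin d)) :
    Bop X z v = ∑ i, v i • X i z := by
  simp [Bop]

lemma sum_smulRight_le {n d : ℕ} (Y : Fin d → EuclideanSpace ℝ (Fin n)) (c : ℝ) (hc : 0 ≤ c)
    (h : ∀ i, ‖Y i‖ ≤ c) :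
    ‖∑ i, (EuclideanSpace.proj i : EuclideanSpace ℝ (Fin d) →L[ℝ] ℝ).smulRight (Y i)‖ ≤ d * c := by
  refine (norm_sum_le_of_le (f := fun i => (EuclideanSpace.proj i : EuclideanSpace ℝ (Fin d) →L[ℝ] ℝ).smulRight (Y i)) Finset.univ (n := fun _ => c) ?_).trans (by simp)
  intro i _
  refine ContinuousLinearMap.opNorm_le_bound _ hc ?_
  intro v
  rw [ContinuousLinearMap.smulRight_apply, norm_smul, mul_comm]
  exact mul_le_mul (h i) (PiLp.norm_apply_le v i) (norm_nonneg _) hc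

lemma Bop_sys {n d : ℕ} (X : Fin d → EuclideanSpace ℝ (Fin n) → EuclideanSpace ℝ (Fin n)) {M : ℝ}
    (hM : 0 ≤ M) (h : ∀ i, SysB (X i) M) : SysB (Bop X) (d * M) := by
  refine ⟨by positivity, ?_, ?_, ?_, ?_⟩
  · unfold Bop
    refine continuous_finsetSum _ fun i _ => ?_
    exact (ContinuousLinearMap.smulRightL ℝ _ _ _).continuous.comp (h i).c
  · intro z
    exact sum_smulRight_le _ M hM (fun i => (h i).b z)
  · intro z z'
    have e : Bop X z - Bop X z' = ∑ i, (EuclideanSpace.proj i : EuclideanSpace ℝ (Fin d) →L[ℝ] ℝ).smulRight (X i z - X i z') := by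
      ext1 v
      simp [Bop, smul_sub, Finset.sum_sub_distrib]
    rw [e, mul_assoc]
    exact sum_smulRight_le _ _ (by positivity) (fun i => (h i).l z z')
  · intro z0 z1 z2
    have e : Bop X z2 - (2:ℝ) • Bop X z1 + Bop X z0 = ∑ i, (EuclideanSpace.proj i : EuclideanSpace ℝ (Fin d) →L[ℝ] ℝ).smulRight (X i z2 - (2:ℝ) • X i z1 + X i z0) := by
      ext1 v
      simp [Bop, smul_sub, smul_add, Finset.sum_sub_distrib, Finset.sum_add_distrib, Finset.smul_sum, smul_comm (2:ℝ)]
    rw [e, mul_assoc]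
    exact sum_smulRight_le _ _ (by positivity) (fun i => (h i).s z0 z1 z2)

/-- trajectories -/
def Traj {n d : ℕ} (X0 : EuclideanSpace ℝ (Fin n) → EuclideanSpace ℝ (Fin n))
    (B : EuclideanSpace ℝ (Fin n) → EuclideanSpace ℝ (Fin d) →L[ℝ] EuclideanSpace ℝ (Fin n))
    (x : EuclideanSpace ℝ (Fin n))
    (u : ℝ → EuclideanSpace ℝ (Fin d))
    (γ : ℝ → EuclideanSpace ℝ (Fin n)) : Prop :=
  ContinuousOn γ (Set.Icc 0 1) ∧
    ∀ t ∈ Set.Icc (0:ℝ) 1,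
      γ t = x + ∫ s in (0:ℝ)..t, (X0 (γ s) + B (γ s) (u s))

section
variable {n d : ℕ} {X0 : EuclideanSpace ℝ (Fin n) → EuclideanSpace ℝ (Fin n)}
    {B : EuclideanSpace ℝ (Fin n) → EuclideanSpace ℝ (Fin d) →L[ℝ] EuclideanSpace ℝ (Fin n)}
    {x : EuclideanSpace ℝ (Fin n)} {L : ℝ}

lemma int_X0 (h0 : SysB X0 L) {γ : ℝ → EuclideanSpace ℝ (Fin n)} (hγ : ContinuousOn γ (Set.Icc 0 1)) :
    Integrable (fun s => X0 (γ s)) (volume.restrict (Icc (0:ℝ) 1)) :=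
  (h0.c.comp_continuousOn hγ).integrableOn_Icc

lemma int_B (hB : SysB B L) {γ : ℝ → EuclideanSpace ℝ (Fin n)} (hγ : ContinuousOn γ (Set.Icc 0 1))
    {v : ℝ → EuclideanSpace ℝ (Fin d)} (hv : Integrable v (volume.restrict (Icc (0:ℝ) 1))) :
    Integrable (fun s => B (γ s) (v s)) (volume.restrict (Icc (0:ℝ) 1)) := by
  refine Integrable.mono' (hv.norm.const_mul L) ?_ ?_
  · exact (ContinuousLinearMap.id ℝ _).aestronglyMeasurable_comp₂
      ((hB.c.comp_continuousOn hγ).aestronglyMeasurable measurableSet_Icc) hv.1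
  · exact ae_of_all _ fun r => (B (γ r)).le_of_opNorm_le (hB.b _) _

lemma int_b (h0 : SysB X0 L) (hB : SysB B L) {γ : ℝ → EuclideanSpace ℝ (Fin n)} (hγ : ContinuousOn γ (Set.Icc 0 1))
    {v : ℝ → EuclideanSpace ℝ (Fin d)} (hv : Integrable v (volume.restrict (Icc (0:ℝ) 1))) :
    Integrable (fun s => X0 (γ s) + B (γ s) (v s)) (volume.restrict (Icc (0:ℝ) 1)) :=
  (int_X0 h0 hγ).add (int_B hB hγ hv)

lemma h00 : (0:ℝ) ∈ Icc (0:ℝ) 1 := ⟨le_rfl, zero_le_one⟩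
lemma h11 : (1:ℝ) ∈ Icc (0:ℝ) 1 := ⟨zero_le_one, le_rfl⟩

/-- a.e. equalities on `[0,1]` pass to interval integrals -/
lemma ii_congr {E : Type*} [NormedAddCommGroup E] [NormedSpace ℝ E] {f g : ℝ → E}
    (h : f =ᵐ[volume.restrict (Icc (0:ℝ) 1)] g) {a b : ℝ} (ha : a ∈ Icc (0:ℝ) 1)
    (hb : b ∈ Icc (0:ℝ) 1) : ∫ r in a..b, f r = ∫ r in a..b, g r := by
  refine intervalIntegral.integral_congr_ae ?_
  have h2 := (ae_restrict_iff' measurableSet_Icc).1 h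
  filter_upwards [h2] with r hr hr2
  rw [uIoc, mem_Ioc] at hr2
  exact hr ⟨(le_min ha.1 hb.1).trans hr2.1.le, hr2.2.trans (max_le ha.2 hb.2)⟩

lemma ii_bound {E : Type*} [NormedAddCommGroup E] [NormedSpace ℝ E] {f : ℝ → E} {g : ℝ → ℝ}
    (h : ∀ᵐ r ∂(volume.restrict (Icc (0:ℝ) 1)), ‖f r‖ ≤ g r)
    (hg : Integrable g (volume.restrict (Icc (0:ℝ) 1))) {a b : ℝ} (ha : a ∈ Icc (0:ℝ) 1)
    (hb : b ∈ Icc (0:ℝ) 1) (hab : a ≤ b) : ‖∫ r in a..b, f r‖ ≤ ∫ r in a..b, g r := by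
  refine intervalIntegral.norm_integral_le_of_norm_le hab ?_ (intOn_interval hg ha hb)
  have h2 := (ae_restrict_iff' measurableSet_Icc).1 h
  filter_upwards [h2] with r hr hr2
  exact hr ⟨ha.1.trans hr2.1.le, hr2.2.trans hb.2⟩

variable {p : ℝ} [Fact (1 ≤ ENNReal.ofReal p)]

lemma kernel (hp : 1 < p) (h0 : SysB X0 L) (hB : SysB B L) (C : ℝ) (hC : 0 ≤ C) :
    ∃ G : ℝ, 0 ≤ G ∧ ∀ (v w : LL d p) (γv γw : ℝ → EuclideanSpace ℝ (Fin n)), ‖v‖ ≤ C →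
      Traj X0 B x v γv → Traj X0 B x w γw → ∀ R,
      (∀ t ∈ Icc (0:ℝ) 1, ‖∫ s in (0:ℝ)..t, B (γw s) ((v - w : LL d p) s)‖ ≤ R) →
      ∀ t ∈ Icc (0:ℝ) 1, ‖γv t - γw t‖ ≤ G * R := by
  obtain ⟨G, hG0, hG⟩ := gron_unif (d := d) hp L C h0.L0 hC
  refine ⟨G, hG0, ?_⟩
  intro v w γv γw hv hγv hγw R hR
  refine hG v hv (fun t => ‖γv t - γw t‖) R (hγv.1.sub hγw.1).norm (fun t => norm_nonneg _) ?_
  intro t ht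
  have i1 := int_b h0 hB hγv.1 (LL_int v)
  have i1' := int_b h0 hB hγw.1 (LL_int v)
  have i2 := int_b h0 hB hγw.1 (LL_int w)
  have i3 := int_B hB hγw.1 (LL_int (v - w))
  have i4 : Integrable (fun s => (X0 (γv s) + B (γv s) (v s)) - (X0 (γw s) + B (γw s) (v s)))
    (volume.restrict (Icc (0:ℝ) 1)) := i1.sub i1'
  have e : γv t - γw t = (∫ s in (0:ℝ)..t, B (γw s) ((v - w : LL d p) s)) +
      ∫ s in (0:ℝ)..t, ((X0 (γv s) + B (γv s) (v s)) - (X0 (γw s) + B (γw s) (v s))) := by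
    rw [hγv.2 t ht, hγw.2 t ht, add_sub_add_left_eq_sub,
      ← intervalIntegral.integral_sub (intOn_interval i1 h00 ht) (intOn_interval i2 h00 ht),
      ← intervalIntegral.integral_add (intOn_interval i3 h00 ht)
        (intOn_interval i4 h00 ht)]
    refine ii_congr ?_ h00 ht
    filter_upwards [Lp.coeFn_sub v w] with s hs
    rw [hs, Pi.sub_apply, map_sub]
    abel
  rw [e]
  refine (norm_add_le _ _).trans (add_le_add (hR t ht) ?_)
  refine ii_bound (ae_of_all _ fun s => ?_) ?_ h00 ht ht.1
  · have : X0 (γv s) + B (γv s) (v s) - (X0 (γw s) + B (γw s) (v s)) =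
      (X0 (γv s) - X0 (γw s)) + (B (γv s) - B (γw s)) (v s) := by
      simp only [_root_.sub_apply]; abel
    rw [this]
    refine (norm_add_le _ _).trans ?_
    have a1 := h0.l (γv s) (γw s)
    have a2 := (B (γv s) - B (γw s)).le_of_opNorm_le (hB.l (γv s) (γw s)) (v s)
    linarith
  · obtain ⟨K, hK⟩ := isCompact_Icc.exists_bound_of_continuousOn (hγv.1.sub hγw.1).norm
    refine Integrable.mul_bdd (((integrable_const 1).add (LL_int v).norm).const_mul L)
      ((hγv.1.sub hγw.1).norm.aestronglyMeasurable measurableSet_Icc) (c := K) ?_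
    exact (ae_restrict_mem measurableSet_Icc).mono hK

lemma int_B_le (hp : 1 < p) (hB : SysB B L) (γ : ℝ → EuclideanSpace ℝ (Fin n)) (v : LL d p) :
    ∀ t ∈ Icc (0:ℝ) 1, ‖∫ s in (0:ℝ)..t, B (γ s) (v s)‖ ≤ L * ‖v‖ := by
  intro t ht
  refine (ii_bound (ae_of_all _ fun s => (B (γ s)).le_of_opNorm_le (hB.b _) _)
    ((LL_int v).norm.const_mul L) h00 ht ht.1).trans ?_
  rw [intervalIntegral.integral_const_mul]
  exact mul_le_mul_of_nonneg_left (L1_le hp v ht) hB.L0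

lemma lip_dep (hp : 1 < p) (h0 : SysB X0 L) (hB : SysB B L) (C : ℝ) (hC : 0 ≤ C) :
    ∃ G : ℝ, 0 ≤ G ∧ ∀ (v w : LL d p) (γv γw : ℝ → EuclideanSpace ℝ (Fin n)), ‖v‖ ≤ C →
      Traj X0 B x v γv → Traj X0 B x w γw →
      ∀ t ∈ Icc (0:ℝ) 1, ‖γv t - γw t‖ ≤ G * ‖v - w‖ := by
  obtain ⟨G, hG0, hG⟩ := kernel (x := x) (p := p) hp h0 hB C hC
  refine ⟨G * L, mul_nonneg hG0 h0.L0, ?_⟩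
  intro v w γv γw hv hγv hγw t ht
  rw [mul_assoc]
  exact hG v w γv γw hv hγv hγw _ (int_B_le hp hB γw (v - w)) t ht

lemma second_diff (hp : 1 < p) (h0 : SysB X0 L) (hB : SysB B L) (C : ℝ) (hC : 0 ≤ C) :
    ∃ G : ℝ, 0 ≤ G ∧ ∀ (v h : LL d p) (γ0 γ1 γ2 : ℝ → EuclideanSpace ℝ (Fin n)),
      ‖v‖ ≤ C → ‖h‖ ≤ C →
      Traj X0 B x v γ0 → Traj X0 B x (v + h : LL d p) γ1 → Traj X0 B x (v + h + h : LL d p) γ2 →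
      ∀ t ∈ Icc (0:ℝ) 1, ‖γ2 t - (2:ℝ) • γ1 t + γ0 t‖ ≤ G * ‖h‖ ^ 2 := by
  obtain ⟨G, hG0, hG⟩ := gron_unif (d := d) hp L (C + C) h0.L0 (by positivity)
  obtain ⟨K, hK0, hK⟩ := lip_dep (x := x) (p := p) hp h0 hB (C + C + C) (by positivity)
  have hL := h0.L0
  refine ⟨G * (L * (1 + (C + C)) * (2 * K ^ 2) + L * (2 * K)), by positivity, ?_⟩
  intro v h γ0 γ1 γ2 hv hh hγ0 hγ1 hγ2
  have hvh : ‖v + h‖ ≤ C + C := (norm_add_le _ _).trans (by linarith)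
  have hvhh : ‖v + h + h‖ ≤ C + C + C := (norm_add_le _ _).trans (by linarith)
  have d10 : ∀ t ∈ Icc (0:ℝ) 1, ‖γ1 t - γ0 t‖ ≤ K * ‖h‖ := by
    intro t ht
    have := hK _ _ _ _ (by linarith) hγ1 hγ0 t ht
    rwa [add_sub_cancel_left] at this
  have d21 : ∀ t ∈ Icc (0:ℝ) 1, ‖γ2 t - γ1 t‖ ≤ K * ‖h‖ := by
    intro t ht
    have := hK _ _ _ _ hvhh hγ2 hγ1 t ht
    rwa [add_sub_cancel_left] at this
  have d20 : ∀ t ∈ Icc (0:ℝ) 1, ‖γ2 t - γ0 t‖ ≤ 2 * K * ‖h‖ := by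
    intro t ht
    have := norm_add_le (γ2 t - γ1 t) (γ1 t - γ0 t)
    rw [sub_add_sub_cancel] at this
    linarith [d10 t ht, d21 t ht]
  set R := (L * (1 + (C + C)) * (2 * K ^ 2) + L * (2 * K)) * ‖h‖ ^ 2 with hR
  rw [mul_assoc, ← hR]
  have hcont : ContinuousOn (fun t => γ2 t - (2:ℝ) • γ1 t + γ0 t) (Icc 0 1) :=
    (hγ2.1.sub (hγ1.1.const_smul (2:ℝ))).add hγ0.1
  refine hG (v + h) hvh (fun t => ‖γ2 t - (2:ℝ) • γ1 t + γ0 t‖) R hcont.norm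
    (fun t => norm_nonneg _) ?_
  intro t ht
  have i0 := int_b h0 hB hγ0.1 (LL_int v)
  have i1 := int_b h0 hB hγ1.1 (LL_int (v + h))
  have i2 := int_b h0 hB hγ2.1 (LL_int (v + h + h))
  have i1' : Integrable (fun s => (2:ℝ) • (X0 (γ1 s) + B (γ1 s) ((v + h : LL d p) s)))
    (volume.restrict (Icc (0:ℝ) 1)) := i1.smul (2:ℝ)
  have i3 : Integrable (fun s => (X0 (γ2 s) + B (γ2 s) ((v + h + h : LL d p) s))
        - (2:ℝ) • (X0 (γ1 s) + B (γ1 s) ((v + h : LL d p) s)))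
    (volume.restrict (Icc (0:ℝ) 1)) := i2.sub i1'
  have e : γ2 t - (2:ℝ) • γ1 t + γ0 t = ∫ s in (0:ℝ)..t,
      ((X0 (γ2 s) + B (γ2 s) ((v + h + h : LL d p) s))
        - (2:ℝ) • (X0 (γ1 s) + B (γ1 s) ((v + h : LL d p) s)) + (X0 (γ0 s) + B (γ0 s) (v s))) := by
    rw [hγ2.2 t ht, hγ1.2 t ht, hγ0.2 t ht,
      intervalIntegral.integral_add (intOn_interval i3 h00 ht)
        (intOn_interval i0 h00 ht),
      intervalIntegral.integral_sub (intOn_interval i2 h00 ht) (intOn_interval i1' h00 ht),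
      intervalIntegral.integral_smul]
    module
  rw [e]
  have j1 : Integrable (fun s => L * (1 + ‖(v + h : LL d p) s‖)) (volume.restrict (Icc (0:ℝ) 1)) :=
    ((integrable_const 1).add (LL_int (v + h)).norm).const_mul L
  have j2 : Integrable (fun s => L * (1 + ‖(v + h : LL d p) s‖) * ‖γ2 s - (2:ℝ) • γ1 s + γ0 s‖)
      (volume.restrict (Icc (0:ℝ) 1)) := by
    obtain ⟨K, hK⟩ := isCompact_Icc.exists_bound_of_continuousOn hcont.norm
    refine Integrable.mul_bdd j1 (hcont.norm.aestronglyMeasurable measurableSet_Icc) (c := K) ?_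
    exact (ae_restrict_mem measurableSet_Icc).mono hK
  have j3 : Integrable (fun s => L * (1 + ‖(v + h : LL d p) s‖) * (2 * (K * ‖h‖) ^ 2))
      (volume.restrict (Icc (0:ℝ) 1)) := j1.mul_const _
  have j4 : Integrable (fun s => L * (2 * K * ‖h‖) * ‖h s‖)
      (volume.restrict (Icc (0:ℝ) 1)) := (LL_int h).norm.const_mul _
  have j34 : Integrable (fun s => L * (1 + ‖(v + h : LL d p) s‖) * (2 * (K * ‖h‖) ^ 2) +
     L * (2 * K * ‖h‖) * ‖h s‖) (volume.restrict (Icc (0:ℝ) 1)) := j3.add j4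
  refine (ii_bound (g := fun s => (L * (1 + ‖(v + h : LL d p) s‖) * (2 * (K * ‖h‖) ^ 2) +
     L * (2 * K * ‖h‖) * ‖h s‖) + L * (1 + ‖(v + h : LL d p) s‖) * ‖γ2 s - (2:ℝ) • γ1 s + γ0 s‖)
     ?_ (j34.add j2) h00 ht ht.1).trans ?_
  · filter_upwards [Lp.coeFn_add v h, Lp.coeFn_add (v + h) h,
      ae_restrict_mem measurableSet_Icc] with s hs1 hs2 hs
    rw [hs2, Pi.add_apply]
    set a := (v + h : LL d p) s with ha
    have hvs : v s = a - h s := by rw [hs1]; simp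
    rw [hvs]
    have e2 : X0 (γ2 s) + B (γ2 s) (a + h s) - (2:ℝ) • (X0 (γ1 s) + B (γ1 s) a) +
        (X0 (γ0 s) + B (γ0 s) (a - h s)) = (X0 (γ2 s) - (2:ℝ) • X0 (γ1 s) + X0 (γ0 s)) +
        (B (γ2 s) - (2:ℝ) • B (γ1 s) + B (γ0 s)) a + (B (γ2 s) - B (γ0 s)) (h s) := by
      simp only [_root_.sub_apply, _root_.add_apply,
        _root_.smul_apply, map_add, map_sub]
      module
    rw [e2]
    have b1 := d10 s hs
    have b2 := d21 s hs
    have b3 := d20 s hs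
    have sq1 : ‖γ1 s - γ0 s‖ ^ 2 ≤ (K * ‖h‖) ^ 2 := by gcongr
    have sq2 : ‖γ2 s - γ1 s‖ ^ 2 ≤ (K * ‖h‖) ^ 2 := by gcongr
    set Q := ‖γ2 s - (2:ℝ) • γ1 s + γ0 s‖ with hQ
    have c1 : ‖X0 (γ2 s) - (2:ℝ) • X0 (γ1 s) + X0 (γ0 s)‖ ≤ L * (Q + 2 * (K * ‖h‖) ^ 2) :=
      (h0.s (γ0 s) (γ1 s) (γ2 s)).trans (mul_le_mul_of_nonneg_left (by linarith) hL)
    have c2 : ‖(B (γ2 s) - (2:ℝ) • B (γ1 s) + B (γ0 s)) a‖ ≤ L * (Q + 2 * (K * ‖h‖) ^ 2) * ‖a‖ :=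
      ContinuousLinearMap.le_of_opNorm_le _
        ((hB.s (γ0 s) (γ1 s) (γ2 s)).trans (mul_le_mul_of_nonneg_left (by linarith) hL)) _
    have c3 : ‖(B (γ2 s) - B (γ0 s)) (h s)‖ ≤ L * (2 * K * ‖h‖) * ‖h s‖ :=
      ContinuousLinearMap.le_of_opNorm_le _ ((hB.l _ _).trans (by gcongr)) _
    refine norm_add₃_le.trans ?_
    linarith
  · rw [intervalIntegral.integral_add (intOn_interval j34 h00 ht) (intOn_interval j2 h00 ht)]
    gcongr
    rw [intervalIntegral.integral_add (intOn_interval j3 h00 ht) (intOn_interval j4 h00 ht),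
      intervalIntegral.integral_const_mul, intervalIntegral.integral_mul_const,
      intervalIntegral.integral_const_mul,
      intervalIntegral.integral_add (by simp) (intOn_interval (LL_int (v + h)).norm h00 ht)]
    simp only [intervalIntegral.integral_const, smul_eq_mul, mul_one, sub_zero]
    have k1 := L1_le hp (v + h) ht
    have k2 := L1_le hp h ht
    have k3 : L * (t + ∫ s in (0:ℝ)..t, ‖(v + h : LL d p) s‖) * (2 * (K * ‖h‖) ^ 2)
       ≤ L * (1 + (C + C)) * (2 * (K * ‖h‖) ^ 2) := by
      gcongr
      · exact ht.2
      · linarith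
    have k4 : L * (2 * K * ‖h‖) * ∫ s in (0:ℝ)..t, ‖h s‖ ≤ L * (2 * K * ‖h‖) * ‖h‖ := by gcongr
    refine (add_le_add k3 k4).trans (le_of_eq ?_)
    rw [hR]; ring

lemma traj_mod (hp : 1 < p) (h0 : SysB X0 L) (hB : SysB B L) {v : LL d p}
    {γ : ℝ → EuclideanSpace ℝ (Fin n)} (hγ : Traj X0 B x v γ) {s t : ℝ} (hs : s ∈ Icc (0:ℝ) 1)
    (ht : t ∈ Icc (0:ℝ) 1) (hst : s ≤ t) :
    ‖γ t - γ s‖ ≤ L * ((t - s) + (t - s) ^ (1 - 1 / p) * ‖v‖) := by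
  have i1 := int_b h0 hB hγ.1 (LL_int v)
  have e : γ t - γ s = ∫ r in s..t, (X0 (γ r) + B (γ r) (v r)) := by
    rw [hγ.2 t ht, hγ.2 s hs, add_sub_add_left_eq_sub,
      intervalIntegral.integral_interval_sub_left (intOn_interval i1 h00 ht) (intOn_interval i1 h00 hs)]
  rw [e]
  have j1 : Integrable (fun s => (1 + ‖v s‖)) (volume.restrict (Icc (0:ℝ) 1)) :=
    ((integrable_const 1).add (LL_int v).norm)
  refine (ii_bound (ae_of_all _ fun r => ?_) (j1.const_mul L) hs ht hst).trans ?_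
  · have a1 := h0.b (γ r)
    have a2 := (B (γ r)).le_of_opNorm_le (hB.b (γ r)) (v r)
    exact (norm_add_le _ _).trans (by linarith)
  · rw [intervalIntegral.integral_const_mul,
      intervalIntegral.integral_add (by simp) (intOn_interval (LL_int v).norm hs ht)]
    simp only [intervalIntegral.integral_const, smul_eq_mul, mul_one]
    have := holder_int hp v hs.1 hst ht.2
    have := h0.L0
    gcongr

lemma weak_unif (hp : 1 < p) (h0 : SysB X0 L) (hB : SysB B L) (C : ℝ) (hC : 0 ≤ C)
    (v : ℕ → LL d p) (w : LL d p) (hv : ∀ k, ‖v k‖ ≤ C) (hw : ‖w‖ ≤ C)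
    (hvw : ∀ δ > 0, ∃ K, ∀ k ≥ K, ∀ s ∈ Icc (0:ℝ) 1, ∀ t ∈ Icc (0:ℝ) 1,
      ‖∫ r in s..t, (v k - w : LL d p) r‖ ≤ δ) :
    ∀ ε > 0, ∃ K, ∀ k ≥ K, ∀ (h : LL d p) (γ γ' : ℝ → EuclideanSpace ℝ (Fin n)), ‖h‖ ≤ 1 →
      Traj X0 B x (v k + h : LL d p) γ → Traj X0 B x (w + h : LL d p) γ' → ‖γ 1 - γ' 1‖ ≤ ε := by
  intro ε hε
  obtain ⟨G, hG0, hG⟩ := kernel (x := x) (p := p) hp h0 hB (C + 1) (by positivity)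
  have hα : 0 < 1 - 1 / p := by
    rw [sub_pos, div_lt_one (by linarith)]; exact hp
  have hL := h0.L0
  have ht : Tendsto (fun N : ℕ => L * (L * (1 / (N:ℝ) + (1 / (N:ℝ)) ^ (1 - 1/p) * (C + 1))) * (C + C))
      atTop (𝓝 (L * (L * (0 + 0 * (C + 1))) * (C + C))) := by
    have h1 : Tendsto (fun N : ℕ => 1 / (N:ℝ)) atTop (𝓝 0) := tendsto_one_div_atTop_nhds_zero_nat
    have h2 : Tendsto (fun N : ℕ => (1 / (N:ℝ)) ^ (1 - 1/p)) atTop (𝓝 0) := by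
      have := h1.rpow_const (p := 1 - 1/p) (Or.inr hα.le)
      rwa [Real.zero_rpow hα.ne'] at this
    exact (((h1.add (h2.mul_const (C + 1))).const_mul L).const_mul L).mul_const _
  set ε' := ε / (2 * (G + 1)) with hε'
  have hε'0 : 0 < ε' := by positivity
  have hev := (ht.eventually_lt_const (u := ε') (by simpa using hε'0)).and (eventually_gt_atTop 0)
  obtain ⟨N, hN, hN0⟩ := hev.exists
  have hN' : (0:ℝ) < N := by exact_mod_cast hN0
  obtain ⟨K, hK⟩ := hvw (ε' / (N * (L + 1))) (by positivity)
  refine ⟨K, fun k hk h γ γ' hh hγ hγ' => ?_⟩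
  have hwh : ‖w + h‖ ≤ C + 1 := (norm_add_le _ _).trans (by linarith)
  have hvh : ‖v k + h‖ ≤ C + 1 := (norm_add_le _ _).trans (by linarith [hv k])
  set ω := L * (L * (1 / (N:ℝ) + (1 / (N:ℝ)) ^ (1 - 1/p) * (C + 1))) with hω
  have hω0 : 0 ≤ ω := by positivity
  have hst := step_est hp (v k - w) (fun s => B (γ' s)) L ω (ε' / (N * (L + 1))) hω0 N hN0
    (hB.c.comp_continuousOn hγ'.1) (fun t => hB.b _) (by
      intro s hs t ht hst hd
      refine (hB.l _ _).trans ?_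
      have h1 := traj_mod hp h0 hB hγ' hs ht hst
      have h2 : (t - s) ^ (1 - 1/p) ≤ (1 / (N:ℝ)) ^ (1 - 1/p) :=
        Real.rpow_le_rpow (by linarith) hd hα.le
      refine mul_le_mul_of_nonneg_left (h1.trans ?_) hL
      gcongr) (hK k hk)
  have hfin := hG (v k + h) (w + h) γ γ' hvh hγ hγ' (2 * ε') (by
    intro t ht
    rw [add_sub_add_right_eq_sub]
    refine (hst t ht).trans ?_
    have h1 : ω * ‖v k - w‖ ≤ ω * (C + C) :=
      mul_le_mul_of_nonneg_left ((norm_sub_le _ _).trans (add_le_add (hv k) hw)) hω0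
    have h2 : N * (L * (ε' / (N * (L + 1)))) ≤ ε' := by
      have : N * (L * (ε' / (N * (L + 1)))) = ε' * (L / (L + 1)) := by field_simp
      rw [this]
      have : L / (L + 1) ≤ 1 := by rw [div_le_one (by positivity)]; linarith
      nlinarith
    linarith) 1 h11
  refine hfin.trans ?_
  have : (2:ℝ) * ε' = ε / (G + 1) := by rw [hε']; field_simp
  rw [this, mul_div_assoc', div_le_iff₀ (by positivity)]
  nlinarith

end
end

noncomputable section

lemma homog_ineq {V : Type*} [NormedAddCommGroup V] [NormedSpace ℝ V] [FiniteDimensional ℝ V]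
    {p : ℝ} (hp : 1 < p) (g : V → V → ℝ) (hc : Continuous (fun z : V × V => g z.1 z.2))
    (hh : ∀ t : ℝ, 0 < t → ∀ a b, g (t • a) (t • b) = t ^ p * g a b)
    (hn : ∀ a b, 0 ≤ g a b) (hpos : ∀ a b, a ≠ b → 0 < g a b) :
    ∀ ε > 0, ∃ C : ℝ, 0 ≤ C ∧ ∀ a b, ‖a - b‖ ^ p ≤ ε * (‖a‖ ^ p + ‖b‖ ^ p) + C * g a b := by
  intro ε hε
  have hp0 : 0 < p := by linarith
  have : ProperSpace V := FiniteDimensional.proper_real V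
  set S : Set (V × V) := Metric.sphere 0 1 ∩ {z | ε ≤ ‖z.1 - z.2‖ ^ p} with hS
  have hSc : IsCompact S := by
    refine (isCompact_sphere _ _).inter_right ?_
    refine isClosed_le continuous_const ?_
    exact (continuous_fst.sub continuous_snd).norm.rpow_const (fun _ => Or.inr hp0.le)
  have hmin : ∃ m : ℝ, 0 < m ∧ ∀ z ∈ S, m ≤ g z.1 z.2 := by
    rcases S.eq_empty_or_nonempty with he | hne
    · exact ⟨1, one_pos, by simp [he]⟩
    · obtain ⟨z, hz, hzm⟩ := hSc.exists_isMinOn hne hc.continuousOn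
      refine ⟨g z.1 z.2, hpos _ _ ?_, fun y hy => hzm hy⟩
      intro h
      have := hz.2
      simp only [mem_ofPred_eq, h, sub_self, norm_zero, Real.zero_rpow hp0.ne'] at this
      linarith
  obtain ⟨m, hm, hmS⟩ := hmin
  refine ⟨2 ^ p / m, by positivity, ?_⟩
  have unit : ∀ a b : V, ‖(a, b)‖ = 1 →
      ‖a - b‖ ^ p ≤ ε * (‖a‖ ^ p + ‖b‖ ^ p) + 2 ^ p / m * g a b := by
    intro a b hab
    have ha : ‖a‖ ≤ 1 := (norm_fst_le (a, b)).trans hab.le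
    have hb : ‖b‖ ≤ 1 := (norm_snd_le (a, b)).trans hab.le
    have hg := hn a b
    by_cases hε2 : ε ≤ ‖a - b‖ ^ p
    · have h1 := hmS (a, b) ⟨by simp [hab], hε2⟩
      have h2 : ‖a - b‖ ^ p ≤ 2 ^ p :=
        Real.rpow_le_rpow (norm_nonneg _) ((norm_sub_le _ _).trans (by linarith)) hp0.le
      have h3 : 2 ^ p ≤ 2 ^ p / m * g a b := by
        rw [div_mul_eq_mul_div, le_div_iff₀ hm]
        gcongr
      have : 0 ≤ ε * (‖a‖ ^ p + ‖b‖ ^ p) := by positivity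
      linarith
    · push Not at hε2
      have h1 : 1 ≤ ‖a‖ ^ p + ‖b‖ ^ p := by
        have ha' : 0 ≤ ‖a‖ ^ p := by positivity
        have hb' : 0 ≤ ‖b‖ ^ p := by positivity
        rw [Prod.norm_def] at hab
        rcases max_choice ‖a‖ ‖b‖ with h | h
        · have h' : ‖a‖ = 1 := h ▸ hab
          rw [h', Real.one_rpow]; linarith
        · have h' : ‖b‖ = 1 := h ▸ hab
          rw [h', Real.one_rpow]; linarith
      have : 0 ≤ 2 ^ p / m * g a b := by positivity
      nlinarith
  intro a b
  by_cases h0 : ‖(a, b)‖ = 0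
  · rw [norm_eq_zero, Prod.mk_eq_zero] at h0
    have := hn a b
    rw [h0.1, h0.2] at this ⊢
    simp only [sub_self, norm_zero, Real.zero_rpow hp0.ne']
    have : 0 ≤ 2 ^ p / m * g 0 0 := by positivity
    linarith
  · have ht : 0 < ‖(a, b)‖ := lt_of_le_of_ne (norm_nonneg _) (Ne.symm h0)
    set t := ‖(a, b)‖ with htd
    have hu := unit (t⁻¹ • a) (t⁻¹ • b) (by
      rw [← Prod.smul_mk, norm_smul, ← htd, norm_inv, Real.norm_of_nonneg ht.le, inv_mul_cancel₀ h0])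
    rw [← smul_sub, hh _ (inv_pos.2 ht), norm_smul, norm_smul, norm_smul, norm_inv,
      Real.norm_of_nonneg ht.le, Real.mul_rpow (by positivity) (norm_nonneg _),
      Real.mul_rpow (by positivity) (norm_nonneg _), Real.mul_rpow (by positivity) (norm_nonneg _)] at hu
    have htp : 0 < t⁻¹ ^ p := Real.rpow_pos_of_pos (inv_pos.2 ht) _
    refine le_of_mul_le_mul_left ?_ htp
    refine hu.trans (le_of_eq ?_)
    ring

/-- `a |a|^(p-2)` -/
lemma spow_eq {p : ℝ} (hp : 1 < p) (a : ℝ) :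
    a * |a| ^ (p - 2) = (max a 0) ^ (p - 1) - (max (-a) 0) ^ (p - 1) := by
  have hz : (0:ℝ) ^ (p - 1) = 0 := Real.zero_rpow (by linarith)
  have key : ∀ b : ℝ, 0 < b → b * b ^ (p - 2) = b ^ (p - 1) := by
    intro b hb
    nth_rw 1 [← Real.rpow_one b]
    rw [← Real.rpow_add hb]; congr 1; ring
  rcases lt_trichotomy a 0 with h | h | h
  · rw [abs_of_neg h, max_eq_right h.le, max_eq_left (by linarith), hz, ← key (-a) (by linarith)]
    ring
  · simp [h]
  · rw [abs_of_pos h, max_eq_left h.le, max_eq_right (by linarith), hz, ← key a h]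
    ring

lemma spow_cont {p : ℝ} (hp : 1 < p) : Continuous (fun a : ℝ => a * |a| ^ (p - 2)) := by
  simp_rw [spow_eq hp]
  exact ((continuous_id.max continuous_const).rpow_const (fun _ => Or.inr (by linarith))).sub
   ((continuous_neg.max continuous_const).rpow_const (fun _ => Or.inr (by linarith)))

lemma spow_strictMono {p : ℝ} (hp : 1 < p) : StrictMono (fun a : ℝ => a * |a| ^ (p - 2)) := by
  intro a b hab
  simp_rw [spow_eq hp]
  have hq : 0 < p - 1 := by linarith
  have h1 : (max a 0) ^ (p - 1) ≤ (max b 0) ^ (p - 1) :=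
    Real.rpow_le_rpow (le_max_right _ _) (max_le_max hab.le le_rfl) hq.le
  have h2 : (max (-b) 0) ^ (p - 1) ≤ (max (-a) 0) ^ (p - 1) :=
    Real.rpow_le_rpow (le_max_right _ _) (max_le_max (by linarith) le_rfl) hq.le
  rcases lt_or_ge a 0 with h | h
  · have : (max (-b) 0) ^ (p - 1) < (max (-a) 0) ^ (p - 1) :=
      Real.rpow_lt_rpow (le_max_right _ _)
        (max_lt (lt_max_of_lt_left (by linarith)) (lt_max_of_lt_left (by linarith))) hq
    linarith
  · have : (max a 0) ^ (p - 1) < (max b 0) ^ (p - 1) :=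
      Real.rpow_lt_rpow (le_max_right _ _)
        (max_lt (lt_max_of_lt_left (by linarith)) (lt_max_of_lt_left (by linarith))) hq
    linarith

lemma mono_ineq {p : ℝ} (hp : 1 < p) :
    ∀ ε > 0, ∃ C : ℝ, 0 ≤ C ∧ ∀ a b : ℝ, |a - b| ^ p ≤ ε * (|a| ^ p + |b| ^ p) +
      C * ((a * |a| ^ (p - 2) - b * |b| ^ (p - 2)) * (a - b)) := by
  have hpos : ∀ a b : ℝ, a ≠ b → 0 < (a * |a| ^ (p - 2) - b * |b| ^ (p - 2)) * (a - b) := by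
    intro a b hab
    rcases lt_or_gt_of_ne hab with h | h
    · have := spow_strictMono hp h
      dsimp only at this
      exact mul_pos_of_neg_of_neg (by linarith) (by linarith)
    · have := spow_strictMono hp h
      dsimp only at this
      exact mul_pos (by linarith) (by linarith)
  refine homog_ineq (V := ℝ) hp (fun a b => (a * |a| ^ (p - 2) - b * |b| ^ (p - 2)) * (a - b)) ?_ ?_ ?_ hpos
  · exact (((spow_cont hp).comp continuous_fst).sub ((spow_cont hp).comp continuous_snd)).mul
      (continuous_fst.sub continuous_snd)
  · intro t ht a b
    simp only [smul_eq_mul, abs_mul, abs_of_pos ht]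
    rw [Real.mul_rpow ht.le (abs_nonneg _), Real.mul_rpow ht.le (abs_nonneg _)]
    have : t ^ p = t ^ (p - 2) * t * t := by
      rw [← Real.rpow_add_one ht.ne', ← Real.rpow_add_one ht.ne']
      congr 1; ring
    rw [this]; ring
  · intro a b
    by_cases h : a = b
    · simp [h]
    · exact (hpos a b h).le

lemma mid_ineq {V : Type*} [NormedAddCommGroup V] [InnerProductSpace ℝ V] [FiniteDimensional ℝ V]
    {p : ℝ} (hp : 1 < p) :
    ∀ ε > 0, ∃ C : ℝ, 0 ≤ C ∧ ∀ a b : V, ‖a - b‖ ^ p ≤ ε * (‖a‖ ^ p + ‖b‖ ^ p) +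
      C * (‖a‖ ^ p / 2 + ‖b‖ ^ p / 2 - ‖(1/2 : ℝ) • (a + b)‖ ^ p) := by
  have hp0 : 0 < p := by linarith
  have hpos : ∀ a b : V, a ≠ b → 0 < ‖a‖ ^ p / 2 + ‖b‖ ^ p / 2 - ‖(1/2 : ℝ) • (a + b)‖ ^ p := by
    intro a b hab
    by_cases h : ‖a‖ = ‖b‖
    · have h1 : ‖(1/2 : ℝ) • (a + b)‖ < ‖a‖ := (norm_midpoint_lt_iff h).2 hab
      have h2 := Real.rpow_lt_rpow (norm_nonneg _) h1 hp0
      rw [← h]; linarith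
    · have h1 := (strictConvexOn_rpow hp).2 (show ‖a‖ ∈ Ici (0:ℝ) from norm_nonneg _)
        (show ‖b‖ ∈ Ici (0:ℝ) from norm_nonneg _) h
        (show (0:ℝ) < 1/2 by norm_num) (show (0:ℝ) < 1/2 by norm_num) (by norm_num)
      have h2 : ‖(1/2 : ℝ) • (a + b)‖ ≤ (1/2:ℝ) • ‖a‖ + (1/2:ℝ) • ‖b‖ := by
        rw [norm_smul, smul_eq_mul, smul_eq_mul, ← mul_add]
        have := norm_add_le a b
        rw [Real.norm_of_nonneg (by norm_num)]
        gcongr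
      have h3 := Real.rpow_le_rpow (norm_nonneg _) h2 hp0.le
      simp only [smul_eq_mul] at h1 h3
      linarith
  refine homog_ineq hp (fun a b : V => ‖a‖ ^ p / 2 + ‖b‖ ^ p / 2 - ‖(1/2 : ℝ) • (a + b)‖ ^ p) ?_ ?_ ?_ hpos
  · have hc : Continuous fun a : V => ‖a‖ ^ p := continuous_norm.rpow_const (fun _ => Or.inr hp0.le)
    exact (((hc.comp continuous_fst).div_const 2).add ((hc.comp continuous_snd).div_const 2)).sub
      (hc.comp ((continuous_fst.add continuous_snd).const_smul _))
  · intro t ht a b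
    rw [← smul_add, smul_comm, norm_smul t, norm_smul t, norm_smul t, Real.norm_of_nonneg ht.le,
      Real.mul_rpow ht.le (norm_nonneg _), Real.mul_rpow ht.le (norm_nonneg _),
      Real.mul_rpow ht.le (norm_nonneg _)]
    ring
  · intro a b
    by_cases h : a = b
    · subst h
      have : (1/2:ℝ) • (a + a) = a := by module
      simp only [this]; linarith
    · exact (hpos a b h).le

section
variable {d : ℕ} {p : ℝ} [Fact (1 ≤ ENNReal.ofReal p)]

lemma LL_int_p (hp : 1 < p) (v : LL d p) :
    Integrable (fun s => ‖v s‖ ^ p) (volume.restrict (Icc (0:ℝ) 1)) := by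
  have := (Lp.memLp v).integrable_norm_rpow (by simp; linarith) (by simp)
  rwa [ENNReal.toReal_ofReal (by linarith)] at this

lemma LL_norm_p (hp : 1 < p) (v : LL d p) :
    ‖v‖ ^ p = ∫ s, ‖v s‖ ^ p ∂(volume.restrict (Icc (0:ℝ) 1)) := by
  have hp0 : 0 < p := by linarith
  have h := (Lp.memLp v).eLpNorm_eq_integral_rpow_norm (by simp; linarith) (by simp)
  have h0 : 0 ≤ ∫ s, ‖v s‖ ^ p ∂(volume.restrict (Icc (0:ℝ) 1)) :=
    integral_nonneg fun s => by positivity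
  rw [Lp.norm_def, h, ENNReal.toReal_ofReal hp0.le, ENNReal.toReal_ofReal (by positivity),
    ← Real.rpow_mul h0, inv_mul_cancel₀ hp0.ne', Real.rpow_one]

lemma LL_mid (hp : 1 < p) : ∀ ε > 0, ∃ C : ℝ, 0 ≤ C ∧ ∀ a b : LL d p,
    ‖a - b‖ ^ p ≤ ε * (‖a‖ ^ p + ‖b‖ ^ p) +
      C * (‖a‖ ^ p / 2 + ‖b‖ ^ p / 2 - ‖(1/2 : ℝ) • (a + b)‖ ^ p) := by
  intro ε hε
  obtain ⟨C, hC0, hC⟩ := mid_ineq (V := EuclideanSpace ℝ (Fin d)) hp ε hε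
  refine ⟨C, hC0, fun a b => ?_⟩
  simp only [LL_norm_p hp]
  have ia := LL_int_p hp a
  have ib := LL_int_p hp b
  have im := LL_int_p hp ((1/2 : ℝ) • (a + b))
  rw [← integral_add ia ib, ← integral_const_mul, ← integral_div, ← integral_div,
    ← integral_add (ia.div_const 2) (ib.div_const 2),
    ← integral_sub (by exact (ia.div_const 2).add (ib.div_const 2)) im, ← integral_const_mul,
    ← integral_add (by exact (ia.add ib).const_mul ε)
      (by exact (((ia.div_const 2).add (ib.div_const 2)).sub im).const_mul C)]
  refine integral_mono_ae (LL_int_p hp (a - b)) (by exact ((ia.add ib).const_mul ε).add ((((ia.div_const 2).add (ib.div_const 2)).sub im).const_mul C)) ?_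
  filter_upwards [Lp.coeFn_sub a b, Lp.coeFn_add a b, Lp.coeFn_smul (1/2:ℝ) (a + b)] with s h1 h2 h3
  rw [h1, h3, Pi.smul_apply, h2]
  exact hC (a s) (b s)

lemma exists_weak_pt (hp : 1 < p) (u : ℕ → LL d p) (C : ℝ) (hu : ∀ k, ‖u k‖ ≤ C) :
    ∃ w : LL d p, ∀ m : ℕ, w ∈ closure (convexHull ℝ (u '' Ici m)) := by
  have hp0 : 0 < p := by linarith
  have hC : 0 ≤ C := (norm_nonneg _).trans (hu 0)
  set S : ℕ → Set (LL d p) := fun m => convexHull ℝ (u '' Ici m) with hS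
  have hanti : ∀ {m l : ℕ}, m ≤ l → S l ⊆ S m := fun h => convexHull_mono (image_mono (Ici_subset_Ici.2 h))
  have hball : ∀ m, ∀ v ∈ S m, ‖v‖ ≤ C := by
    intro m v hv
    have : S m ⊆ Metric.closedBall 0 C := by
      refine convexHull_min ?_ (convex_closedBall _ _)
      rintro _ ⟨k, _, rfl⟩
      simpa using hu k
    simpa using this hv
  have hballp : ∀ m, ∀ v ∈ S m, ‖v‖ ^ p ≤ C ^ p := fun m v hv =>
    Real.rpow_le_rpow (norm_nonneg _) (hball m v hv) hp0.le
  set D : ℕ → ℝ := fun m => sInf ((fun v => ‖v‖ ^ p) '' S m) with hD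
  have hbdd : ∀ m, BddBelow ((fun v => ‖v‖ ^ p) '' S m) := by
    intro m
    refine ⟨0, ?_⟩
    rintro _ ⟨v, _, rfl⟩
    positivity
  have hne : ∀ m, ((fun v => ‖v‖ ^ p) '' S m).Nonempty := by
    intro m
    exact ⟨_, u m, subset_convexHull ℝ _ ⟨m, mem_Ici.2 le_rfl, rfl⟩, rfl⟩
  have hDle : ∀ m, ∀ v ∈ S m, D m ≤ ‖v‖ ^ p := fun m v hv => csInf_le (hbdd m) ⟨v, hv, rfl⟩
  have hDmono : Monotone D := fun m l h => csInf_le_csInf (hbdd m) (hne l) (image_mono (hanti h))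
  have hex : ∀ m : ℕ, ∃ v ∈ S m, ‖v‖ ^ p < D m + 1 / ((m:ℝ) + 1) := by
    intro m
    obtain ⟨_, ⟨v, hv, rfl⟩, h⟩ := exists_lt_of_csInf_lt (hne m)
      (show sInf _ < D m + 1 / ((m:ℝ) + 1) from lt_add_of_pos_right _ (by positivity))
    exact ⟨v, hv, h⟩
  choose w hwS hwD using hex
  have hDbdd : BddAbove (range D) := by
    refine ⟨C ^ p, ?_⟩
    rintro _ ⟨m, rfl⟩
    exact (hDle m _ (hwS m)).trans (hballp m _ (hwS m))
  have hDt : Tendsto D atTop (𝓝 (⨆ m, D m)) := tendsto_atTop_ciSup hDmono hDbdd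
  set D' := ⨆ m, D m with hD'
  have hη : Tendsto (fun m : ℕ => (D' - D m) / 2 + 1 / ((m:ℝ) + 1)) atTop (𝓝 ((D' - D') / 2 + 0)) :=
    ((tendsto_const_nhds.sub hDt).div_const 2).add tendsto_one_div_add_atTop_nhds_zero_nat
  rw [sub_self, zero_div, add_zero] at hη
  have hcauchy : CauchySeq w := by
    rw [Metric.cauchySeq_iff']
    intro ε hε
    have hεp : 0 < ε ^ p := Real.rpow_pos_of_pos hε p
    obtain ⟨K, hK0, hK⟩ := LL_mid (d := d) hp (ε ^ p / (4 * (C ^ p + 1))) (by positivity)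
    obtain ⟨m, hm⟩ := (hη.eventually_lt_const (u := ε ^ p / (4 * (K + 1))) (by positivity)).exists
    refine ⟨m, fun l hl => ?_⟩
    rw [dist_comm, dist_eq_norm]
    have h1 := hK (w m) (w l)
    have hmid : (1/2:ℝ) • (w m + w l) ∈ S m := by
      rw [smul_add]
      exact convex_convexHull ℝ _ (hwS m) (hanti hl (hwS l)) (by norm_num) (by norm_num) (by norm_num)
    have h2 := hDle m _ hmid
    have h3 := hwD m
    have h4 := hwD l
    have h5 : D l ≤ D' := le_ciSup hDbdd l
    have h6 : 1 / ((l:ℝ) + 1) ≤ 1 / ((m:ℝ) + 1) := by gcongr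
    have h7 : ‖w m‖ ^ p / 2 + ‖w l‖ ^ p / 2 - ‖(1/2 : ℝ) • (w m + w l)‖ ^ p ≤ ε ^ p / (4 * (K + 1)) := by
      linarith
    have h8 : K * (‖w m‖ ^ p / 2 + ‖w l‖ ^ p / 2 - ‖(1/2 : ℝ) • (w m + w l)‖ ^ p) ≤ ε ^ p / 4 := by
      refine (mul_le_mul_of_nonneg_left h7 hK0).trans ?_
      rw [mul_div_assoc', div_le_div_iff₀ (by positivity) (by norm_num)]
      nlinarith
    have h9 : ε ^ p / (4 * (C ^ p + 1)) * (‖w m‖ ^ p + ‖w l‖ ^ p) ≤ ε ^ p / 2 := by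
      have ha := hballp m _ (hwS m)
      have hb := hballp l _ (hwS l)
      have hCp : 0 ≤ C ^ p := by positivity
      calc _ ≤ ε ^ p / (4 * (C ^ p + 1)) * (C ^ p + C ^ p) := by gcongr
        _ ≤ _ := by
          rw [div_mul_eq_mul_div, div_le_div_iff₀ (by positivity) (by norm_num)]
          nlinarith
    have h10 : ‖w m - w l‖ ^ p < ε ^ p := by linarith
    exact (Real.rpow_lt_rpow_iff (norm_nonneg _) hε.le hp0).1 h10
  obtain ⟨w', hw'⟩ := cauchySeq_tendsto_of_complete hcauchy
  refine ⟨w', fun m => mem_closure_of_tendsto hw' ?_⟩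
  filter_upwards [eventually_ge_atTop m] with l hl
  exact hanti hl (hwS l)

/-- The functional `v ↦ ∫_{(-∞,t]} v`. -/
def IntF (hp : 1 < p) (t : ℝ) : LL d p →L[ℝ] EuclideanSpace ℝ (Fin d) :=
  LinearMap.mkContinuous
    { toFun := fun v => ∫ r in Iic t, v r ∂(volume.restrict (Icc (0:ℝ) 1))
      map_add' := by
        intro a b
        rw [← integral_add (LL_int a).integrableOn (LL_int b).integrableOn]
        exact integral_congr_ae (ae_restrict_of_ae (Lp.coeFn_add a b))
      map_smul' := by
        intro c a
        rw [RingHom.id_apply, ← integral_smul]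
        exact integral_congr_ae (ae_restrict_of_ae (Lp.coeFn_smul c a)) } 1 (by
    intro v
    have h1 := L1_le hp v (t := 1) h11
    rw [intervalIntegral.integral_of_le zero_le_one, ← integral_Icc_eq_integral_Ioc] at h1
    simp only [LinearMap.coe_mk, AddHom.coe_mk, one_mul]
    refine (norm_integral_le_integral_norm _).trans (le_trans ?_ h1)
    exact setIntegral_le_integral (LL_int v).norm (ae_of_all _ fun _ => norm_nonneg _))

lemma IntF_apply (hp : 1 < p) {t : ℝ} (ht : t ∈ Icc (0:ℝ) 1) (v : LL d p) :
    IntF hp t v = ∫ r in (0:ℝ)..t, v r := by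
  change ∫ r in Iic t, v r ∂(volume.restrict (Icc (0:ℝ) 1)) = _
  rw [intervalIntegral.integral_of_le ht.1, ← integral_Icc_eq_integral_Ioc,
    Measure.restrict_restrict measurableSet_Iic]
  congr 2
  ext r
  simp only [mem_inter_iff, mem_Iic, mem_Icc]
  constructor
  · rintro ⟨a, b, c⟩; exact ⟨b, a⟩
  · rintro ⟨a, b⟩; exact ⟨b, a, b.trans ht.2⟩

lemma weak_compact (hp : 1 < p) (u : ℕ → LL d p) (C : ℝ) (hu : ∀ k, ‖u k‖ ≤ C) :
    ∃ (φ : ℕ → ℕ) (w : LL d p), StrictMono φ ∧ ‖w‖ ≤ C ∧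
      ∀ δ > 0, ∃ K, ∀ k ≥ K, ∀ s ∈ Icc (0:ℝ) 1, ∀ t ∈ Icc (0:ℝ) 1,
      ‖∫ r in s..t, (u (φ k) - w : LL d p) r‖ ≤ δ := by
  have hC : 0 ≤ C := (norm_nonneg _).trans (hu 0)
  have hIn : ∀ (t : ℝ) (v : LL d p), ‖IntF hp t v‖ ≤ ‖v‖ := by
    intro t v
    have h : ‖IntF (d := d) hp t‖ ≤ 1 := LinearMap.mkContinuous_norm_le _ zero_le_one _
    have := (IntF hp t).le_of_opNorm_le h v
    rwa [one_mul] at this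
  obtain ⟨c, -, φ, hφ, hc⟩ := (isCompact_univ_pi (fun _ : ℚ =>
      isCompact_closedBall (0 : EuclideanSpace ℝ (Fin d)) C)).tendsto_subseq
      (x := fun k => fun q : ℚ => IntF hp (q:ℝ) (u k)) (by
        intro k q _
        simpa using (hIn q (u k)).trans (hu k))
  rw [tendsto_pi_nhds] at hc
  obtain ⟨w, hw⟩ := exists_weak_pt hp (u ∘ φ) C (fun k => hu _)
  have hwC : ‖w‖ ≤ C := by
    have : closure (convexHull ℝ ((u ∘ φ) '' Ici 0)) ⊆ Metric.closedBall 0 C := by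
      refine closure_minimal (convexHull_min ?_ (convex_closedBall _ _)) Metric.isClosed_closedBall
      rintro _ ⟨k, _, rfl⟩
      simpa using hu _
    simpa using this (hw 0)
  refine ⟨φ, w, hφ, hwC, ?_⟩
  have hcw : ∀ q : ℚ, IntF hp (q:ℝ) w = c q := by
    intro q
    rw [← dist_le_zero]
    refine le_of_forall_pos_le_add fun ε hε => ?_
    rw [zero_add]
    obtain ⟨m, hm⟩ := (Metric.tendsto_atTop.1 (hc q)) ε hε
    have : closure (convexHull ℝ ((u ∘ φ) '' Ici m)) ⊆
        (IntF hp (q:ℝ)) ⁻¹' (Metric.closedBall (c q) ε) := by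
      refine closure_minimal (convexHull_min ?_ ?_)
        (Metric.isClosed_closedBall.preimage (IntF hp (q:ℝ)).continuous)
      · rintro _ ⟨k, hk, rfl⟩
        exact (hm k hk).le
      · exact (convex_closedBall (c q) ε).linear_preimage (IntF hp (q:ℝ)).toLinearMap
    exact this (hw m)
  have hconv : ∀ q : ℚ, Tendsto (fun k => ‖IntF hp (q:ℝ) (u (φ k) - w)‖) atTop (𝓝 0) := by
    intro q
    have := ((hc q).sub_const (c q)).norm
    rw [sub_self, norm_zero] at this
    refine this.congr fun k => ?_
    rw [map_sub, hcw q]; rfl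
  intro δ hδ
  have hα : 0 < 1 - 1 / p := by
    rw [sub_pos, div_lt_one (by linarith)]; exact hp
  have h1 : Tendsto (fun N : ℕ => (1 / (N:ℝ)) ^ (1 - 1/p) * (C + C)) atTop (𝓝 0) := by
    have h1 : Tendsto (fun N : ℕ => 1 / (N:ℝ)) atTop (𝓝 0) := tendsto_one_div_atTop_nhds_zero_nat
    have := (h1.rpow_const (p := 1 - 1/p) (Or.inr hα.le)).mul_const (C + C)
    rwa [Real.zero_rpow hα.ne', zero_mul] at this
  obtain ⟨N, hN, hN0⟩ := ((h1.eventually_lt_const (u := δ / 4) (by positivity)).and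
    (eventually_gt_atTop 0)).exists
  have hN' : (0:ℝ) < N := by exact_mod_cast hN0
  have hev : ∀ᶠ k in atTop, ∀ j ∈ Finset.range (N + 1),
      ‖IntF hp (((j:ℚ) / (N:ℚ) : ℚ) : ℝ) (u (φ k) - w)‖ < δ / 4 := by
    rw [Filter.eventually_all_finset]
    intro j _
    exact (hconv _).eventually_lt_const (by positivity)
  obtain ⟨K, hK⟩ := eventually_atTop.1 hev
  refine ⟨K, fun k hk => ?_⟩
  set v : LL d p := u (φ k) - w with hv
  have hvC : ‖v‖ ≤ C + C := (norm_sub_le _ _).trans (add_le_add (hu _) hwC)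
  have main : ∀ t ∈ Icc (0:ℝ) 1, ‖∫ r in (0:ℝ)..t, v r‖ ≤ δ / 2 := by
    intro t ht
    set j := ⌊t * N⌋₊ with hj
    have hj1 : (j:ℝ) ≤ t * N := Nat.floor_le (mul_nonneg ht.1 hN'.le)
    have hj2 : t * N < j + 1 := Nat.lt_floor_add_one _
    have hjN : j ≤ N := by
      have : (j:ℝ) ≤ N := hj1.trans (by nlinarith [ht.2])
      exact_mod_cast this
    have ha : (j / N : ℝ) ∈ Icc (0:ℝ) 1 := ⟨by positivity, by rw [div_le_one hN']; exact_mod_cast hjN⟩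
    have hat : (j / N : ℝ) ≤ t := by rw [div_le_iff₀ hN']; exact hj1
    have hd : t - j / N ≤ 1 / N := by
      rw [sub_le_iff_le_add, ← add_div, le_div_iff₀ hN']; linarith
    have h3 := hK k hk j (Finset.mem_range.2 (by omega))
    push_cast at h3
    rw [IntF_apply hp ha] at h3
    have h4 := holder_int hp v ha.1 hat ht.2
    have h5 : (t - j / N) ^ (1 - 1/p) * ‖v‖ ≤ (1 / (N:ℝ)) ^ (1 - 1/p) * (C + C) :=
      mul_le_mul (Real.rpow_le_rpow (by linarith) hd hα.le) hvC (norm_nonneg _) (by positivity)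
    have h6 := intervalIntegral.norm_integral_le_integral_norm (f := fun r => v r) (μ := volume) hat
    rw [← intervalIntegral.integral_add_adjacent_intervals (intOn_interval (LL_int v) h00 ha)
      (intOn_interval (LL_int v) ha ht)]
    refine (norm_add_le _ _).trans ?_
    linarith
  intro s hs t ht
  have e := intervalIntegral.integral_interval_sub_left (intOn_interval (LL_int v) h00 ht)
    (intOn_interval (LL_int v) h00 hs)
  rw [← e]
  refine (norm_sub_le _ _).trans ?_
  linarith [main s hs, main t ht]

end
end

noncomputable section

lemma taylor_abs {E W : Type*} [NormedAddCommGroup E] [NormedSpace ℝ E]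
    [NormedAddCommGroup W] [NormedSpace ℝ W] {F : E → W} {D : E →L[ℝ] W} {v : E}
    (hD : HasFDerivAt F D v) {G : ℝ} (hG : 0 ≤ G)
    (hs : ∀ h : E, ‖h‖ ≤ 1 → ‖F (v + h + h) - (2:ℝ) • F (v + h) + F v‖ ≤ G * ‖h‖ ^ 2) :
    ∀ h : E, ‖h‖ ≤ 1 → ‖F (v + h) - F v - D h‖ ≤ G * ‖h‖ ^ 2 := by
  have key : ∀ c > 0, ∀ h : E, ‖h‖ ≤ 1 → ‖F (v + h) - F v - D h‖ ≤ c * ‖h‖ + G * ‖h‖ ^ 2 := by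
    intro c hc
    have h1 := (hasFDerivAt_iff_isLittleO_nhds_zero.1 hD).bound hc
    obtain ⟨δ, hδ, hb⟩ := Metric.eventually_nhds_iff.1 h1
    have ind : ∀ m : ℕ, ∀ h : E, ‖h‖ ≤ 1 → ‖h‖ < 2 ^ m * δ →
        ‖F (v + h) - F v - D h‖ ≤ c * ‖h‖ + G * ‖h‖ ^ 2 := by
      intro m
      induction m with
      | zero =>
        intro h _ h2
        have := hb (y := h) (by simpa using h2)
        have h3 : 0 ≤ G * ‖h‖ ^ 2 := by positivity
        linarith
      | succ m ih =>
        intro h h1 h2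
        set k : E := (1/2 : ℝ) • h with hk
        have hkn : ‖k‖ = ‖h‖ / 2 := by
          rw [hk, norm_smul, Real.norm_of_nonneg (by norm_num)]; ring
        have hh : h = k + k := by rw [hk]; module
        have i1 := ih k (by rw [hkn]; linarith [norm_nonneg h]) (by rw [hkn]; rw [pow_succ] at h2; linarith)
        have i2 := hs k (by rw [hkn]; linarith [norm_nonneg h])
        have e : F (v + h) - F v - D h = (F (v + k + k) - (2:ℝ) • F (v + k) + F v) +
            (2:ℝ) • (F (v + k) - F v - D k) := by
          have : D h = (2:ℝ) • D k := by rw [hh, map_add, two_smul]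
          rw [this, hh, ← add_assoc]; module
        rw [e]
        refine (norm_add_le _ _).trans ?_
        rw [norm_smul, Real.norm_of_nonneg (by norm_num)]
        rw [hkn] at i1 i2
        have h3 : 0 ≤ G * ‖h‖ ^ 2 := by positivity
        nlinarith
    intro h hh
    obtain ⟨m, hm⟩ := pow_unbounded_of_one_lt (‖h‖ / δ) (one_lt_two (α := ℝ))
    exact ind m h hh (by rwa [div_lt_iff₀ hδ] at hm)
  intro h hh
  refine le_of_forall_pos_le_add fun c hc => ?_
  have := key c hc h hh
  nlinarith [norm_nonneg h]

lemma op_conv {E W : Type*} [NormedAddCommGroup E] [NormedSpace ℝ E]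
    [NormedAddCommGroup W] [NormedSpace ℝ W] {F : E → W} {D : E → E →L[ℝ] W}
    {G : ℝ} (hG : 0 ≤ G) (v : ℕ → E) (w : E)
    (hv : ∀ k, ∀ h : E, ‖h‖ ≤ 1 → ‖F (v k + h) - F (v k) - D (v k) h‖ ≤ G * ‖h‖ ^ 2)
    (hw : ∀ h : E, ‖h‖ ≤ 1 → ‖F (w + h) - F w - D w h‖ ≤ G * ‖h‖ ^ 2)
    (hc : ∀ ε > 0, ∃ K, ∀ k ≥ K, ∀ h : E, ‖h‖ ≤ 1 → ‖F (v k + h) - F (w + h)‖ ≤ ε) :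
    Tendsto (fun k => D (v k)) atTop (𝓝 (D w)) := by
  rw [Metric.tendsto_atTop]
  intro ε hε
  set η : ℝ := min 1 (ε / (8 * (G + 1))) with hη
  have hη0 : 0 < η := by positivity
  have hη1 : η ≤ 1 := min_le_left _ _
  have hη2 : G * η ≤ ε / 8 := by
    have : η ≤ ε / (8 * (G + 1)) := min_le_right _ _
    rw [le_div_iff₀ (by positivity)] at this
    nlinarith
  obtain ⟨K, hK⟩ := hc (η * ε / 8) (by positivity)
  refine ⟨K, fun k hk => ?_⟩
  rw [dist_eq_norm]
  refine lt_of_le_of_lt (ContinuousLinearMap.opNorm_le_of_unit_norm (C := ε / 2) (by positivity) ?_) (by linarith)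
  intro h hh
  have n1 : ‖η • h‖ = η := by rw [norm_smul, hh, Real.norm_of_nonneg hη0.le, mul_one]
  have a1 := hv k (η • h) (by rw [n1]; exact hη1)
  have a2 := hw (η • h) (by rw [n1]; exact hη1)
  have a3 := hK k hk (η • h) (by rw [n1]; exact hη1)
  have a4 := hK k hk 0 (by simp)
  rw [add_zero, add_zero] at a4
  rw [n1] at a1 a2
  have e : η • ((D (v k) - D w) h) = (F (v k + η • h) - F (w + η • h)) - (F (v k) - F w) -
      (F (v k + η • h) - F (v k) - D (v k) (η • h)) + (F (w + η • h) - F w - D w (η • h)) := by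
    simp only [sub_apply, map_smul]
    module
  have h5 : η * ‖(D (v k) - D w) h‖ ≤ η * (ε / 2) := by
    have : ‖η • ((D (v k) - D w) h)‖ = η * ‖(D (v k) - D w) h‖ := by
      rw [norm_smul, Real.norm_of_nonneg hη0.le]
    rw [← this, e]
    refine (norm_add_le _ _).trans ?_
    have b1 := norm_sub_le (F (v k + η • h) - F (w + η • h) - (F (v k) - F w)) (F (v k + η • h) - F (v k) - D (v k) (η • h))
    have b2 := norm_sub_le (F (v k + η • h) - F (w + η • h)) (F (v k) - F w)
    have : G * η ^ 2 ≤ η * (ε / 8) := by nlinarith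
    linarith
  exact le_of_mul_le_mul_left h5 hη0

lemma lagrange {E W : Type*} [NormedAddCommGroup E] [NormedSpace ℝ E]
    [NormedAddCommGroup W] [NormedSpace ℝ W] [FiniteDimensional ℝ W]
    (D : ℕ → E →L[ℝ] W) (D0 : E →L[ℝ] W) (hD : Tendsto D atTop (𝓝 D0))
    (hs : Function.Surjective D0) (l : ℕ → E →L[ℝ] ℝ) (C : ℝ) (hl : ∀ k, ‖l k‖ ≤ C)
    (hk : ∀ ε > 0, ∃ K : ℕ, ∀ k ≥ K, ∀ h, D k h = 0 → ‖h‖ ≤ 1 → |l k h| ≤ ε) :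
    ∃ (ψ : ℕ → ℕ) (l0 : E →L[ℝ] ℝ), StrictMono ψ ∧ Tendsto (fun k => l (ψ k)) atTop (𝓝 l0) := by
  have : CompleteSpace W := FiniteDimensional.complete ℝ W
  obtain ⟨g, hg⟩ := (D0 : E →ₗ[ℝ] W).exists_rightInverse_of_surjective (LinearMap.range_eq_top.2 hs)
  set R : W →L[ℝ] E := LinearMap.toContinuousLinearMap g with hR
  have hDR : D0.comp R = 1 := by
    ext z
    exact congrArg (fun f => f z) hg
  have cR : Continuous fun A : E →L[ℝ] W => A.comp R := by fun_prop
  have hT : Tendsto (fun k => (D k).comp R) atTop (𝓝 (1 : W →L[ℝ] W)) := by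
    rw [← hDR]; exact (cR.tendsto D0).comp hD
  have hS : Tendsto (fun k => Ring.inverse ((D k).comp R)) atTop (𝓝 (1 : W →L[ℝ] W)) := by
    have := (NormedRing.inverse_continuousAt (1 : (W →L[ℝ] W)ˣ)).tendsto
    rw [Units.val_one, Ring.inverse_one] at this
    exact this.comp hT
  set Rk : ℕ → W →L[ℝ] E := fun k => R.comp (Ring.inverse ((D k).comp R)) with hRk
  have hRkt : Tendsto Rk atTop (𝓝 R) := by
    have c : Continuous fun A : W →L[ℝ] W => R.comp A := by fun_prop
    have := (c.tendsto 1).comp hS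
    have e : R.comp (1 : W →L[ℝ] W) = R := R.comp_id
    rw [e] at this
    exact this
  have hinv : ∀ᶠ k in atTop, (D k).comp (Rk k) = 1 := by
    have h1 : ∀ᶠ A in 𝓝 (1 : W →L[ℝ] W), IsUnit A := Units.isOpen.mem_nhds isUnit_one
    filter_upwards [hT.eventually h1] with k hu
    have := Ring.mul_inverse_cancel _ hu
    exact this
  set P : ℕ → E →L[ℝ] E := fun k => ContinuousLinearMap.id ℝ E - (Rk k).comp (D k) with hP
  have hRD : Tendsto (fun k => (Rk k).comp (D k)) atTop (𝓝 (R.comp D0)) := by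
    have c : Continuous fun q : (W →L[ℝ] E) × (E →L[ℝ] W) => q.1.comp q.2 := by fun_prop
    exact (c.tendsto (R, D0)).comp (hRkt.prodMk_nhds hD)
  have hPt : Tendsto P atTop (𝓝 (ContinuousLinearMap.id ℝ E - R.comp D0)) := hRD.const_sub _
  have hlP : Tendsto (fun k => (l k).comp (P k)) atTop (𝓝 0) := by
    rw [Metric.tendsto_atTop]
    intro ε hε
    have hb : ∀ᶠ k in atTop, ‖P k‖ < ‖ContinuousLinearMap.id ℝ E - R.comp D0‖ + 1 :=
      hPt.norm.eventually_lt_const (by linarith)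
    set Q := ‖ContinuousLinearMap.id ℝ E - R.comp D0‖ + 1 with hQ
    have hQ0 : 0 < Q := by positivity
    obtain ⟨K1, hK1⟩ := hk (ε / (2 * Q)) (by positivity)
    obtain ⟨K2, hK2⟩ := eventually_atTop.1 (hb.and hinv)
    refine ⟨max K1 K2, fun k hkk => ?_⟩
    obtain ⟨hPk, hik⟩ := hK2 k (le_trans (le_max_right _ _) hkk)
    have hK := hK1 k (le_trans (le_max_left _ _) hkk)
    rw [dist_zero_right]
    refine lt_of_le_of_lt (ContinuousLinearMap.opNorm_le_bound _ (M := ε / 2) (by positivity) ?_) (by linarith)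
    intro h
    have h0 : D k (P k h) = 0 := by
      have : D k (Rk k (D k h)) = D k h := congrArg (fun f => f (D k h)) hik
      simp [hP, this]
    have hz : ∀ z, D k z = 0 → |l k z| ≤ ε / (2 * Q) * ‖z‖ := by
      intro z hz
      by_cases hz0 : z = 0
      · simp [hz0]
      have hzn : 0 < ‖z‖ := norm_pos_iff.2 hz0
      have := hK (‖z‖⁻¹ • z) (by simp [hz]) (by rw [norm_smul, norm_inv, norm_norm, inv_mul_cancel₀ hzn.ne'])
      rw [map_smul, smul_eq_mul, abs_mul, abs_of_pos (inv_pos.2 hzn), inv_mul_le_iff₀ hzn] at this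
      linarith
    rw [ContinuousLinearMap.comp_apply, Real.norm_eq_abs]
    calc _ ≤ ε / (2 * Q) * ‖P k h‖ := hz _ h0
      _ ≤ ε / (2 * Q) * (Q * ‖h‖) := by
        gcongr; exact (P k).le_of_opNorm_le hPk.le h
      _ = ε / 2 * ‖h‖ := by field_simp
  have hC : 0 ≤ C := (norm_nonneg _).trans (hl 0)
  obtain ⟨Bd, hBd⟩ := hRkt.norm.isBoundedUnder_le.eventually_le
  have hlam : ∀ᶠ k in atTop, (l k).comp (Rk k) ∈ Metric.closedBall (0 : W →L[ℝ] ℝ) (C * Bd) := by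
    filter_upwards [hBd] with k h
    rw [mem_closedBall_zero_iff]
    refine (ContinuousLinearMap.opNorm_comp_le _ _).trans ?_
    have := hl k
    gcongr
  have : FiniteDimensional ℝ (W →L[ℝ] ℝ) := inferInstance
  have : ProperSpace (W →L[ℝ] ℝ) := FiniteDimensional.proper ℝ _
  obtain ⟨lam, _, ψ, hψ, hlim⟩ := tendsto_subseq_of_frequently_bounded Metric.isBounded_closedBall hlam.frequently
  refine ⟨ψ, lam.comp D0, hψ, ?_⟩
  have e : ∀ k, l (ψ k) = (l (ψ k)).comp (P (ψ k)) + ((l (ψ k)).comp (Rk (ψ k))).comp (D (ψ k)) := by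
    intro k
    ext h
    simp [hP]
  have c : Continuous fun q : (W →L[ℝ] ℝ) × (E →L[ℝ] W) => q.1.comp q.2 := by fun_prop
  have t1 := (c.tendsto (lam, D0)).comp (hlim.prodMk_nhds (hD.comp hψ.tendsto_atTop))
  have t2 := (hlP.comp hψ.tendsto_atTop).add t1
  rw [zero_add] at t2
  refine t2.congr fun k => ?_
  exact (e k).symm

end

noncomputable section

lemma spow_mul_le {p : ℝ} (hp : 1 < p) (a b : ℝ) :
    |a * |a| ^ (p - 2) * b| ≤ |a| ^ p + |b| ^ p := by
  have hp0 : 0 < p := by linarith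
  by_cases ha : a = 0
  · simp only [ha, zero_mul, abs_zero]; positivity
  have ha' : 0 < |a| := abs_pos.2 ha
  have h1 : |a * |a| ^ (p - 2) * b| = |a| ^ (p - 1) * |b| := by
    rw [abs_mul, abs_mul, abs_of_nonneg (by positivity : (0:ℝ) ≤ |a| ^ (p - 2))]
    congr 1
    rw [show p - 1 = 1 + (p - 2) by ring, Real.rpow_add ha', Real.rpow_one]
  rw [h1]
  rcases le_total |a| |b| with h | h
  · have hb : 0 < |b| := ha'.trans_le h
    calc _ ≤ |b| ^ (p - 1) * |b| := by
          gcongr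
      _ = |b| ^ p := by rw [← Real.rpow_add_one hb.ne']; congr 1; ring
      _ ≤ _ := by have : 0 ≤ |a| ^ p := by positivity
                  linarith
  · calc _ ≤ |a| ^ (p - 1) * |a| := by
          gcongr
      _ = |a| ^ p := by rw [← Real.rpow_add_one ha'.ne']; congr 1; ring
      _ ≤ _ := by have : 0 ≤ |b| ^ p := by positivity
                  linarith

section
variable {d : ℕ} {p : ℝ} [Fact (1 ≤ ENNReal.ofReal p)]

lemma coord_le (v : EuclideanSpace ℝ (Fin d)) (i : Fin d) : |v i| ≤ ‖v‖ := by
  have := PiLp.norm_apply_le v i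
  rwa [Real.norm_eq_abs] at this

lemma coord_meas (v : LL d p) (i : Fin d) :
    AEStronglyMeasurable (fun s => v s i) (volume.restrict (Icc (0:ℝ) 1)) :=
  (EuclideanSpace.proj (𝕜 := ℝ) i).continuous.comp_aestronglyMeasurable (Lp.aestronglyMeasurable v)

lemma coord_int_p (hp : 1 < p) (v : LL d p) (i : Fin d) :
    Integrable (fun s => |v s i| ^ p) (volume.restrict (Icc (0:ℝ) 1)) := by
  refine (LL_int_p hp v).mono' ?_ (Eventually.of_forall fun s => ?_)
  · exact (continuous_abs.rpow_const (fun _ => Or.inr (by linarith))).comp_aestronglyMeasurable (coord_meas v i)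
  · rw [Real.norm_of_nonneg (by positivity)]
    exact Real.rpow_le_rpow (abs_nonneg _) (coord_le _ i) (by linarith)

lemma coord_int_le (hp : 1 < p) (v : LL d p) (i : Fin d) :
    ∫ s, |v s i| ^ p ∂(volume.restrict (Icc (0:ℝ) 1)) ≤ ‖v‖ ^ p := by
  rw [LL_norm_p hp]
  refine integral_mono (coord_int_p hp v i) (LL_int_p hp v) fun s => ?_
  exact Real.rpow_le_rpow (abs_nonneg _) (coord_le _ i) (by linarith)

lemma pair_int (hp : 1 < p) (u h : LL d p) (i : Fin d) :
    Integrable (fun t => p * (u t i * |u t i| ^ (p - 2)) * h t i) (volume.restrict (Icc (0:ℝ) 1)) := by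
  have : Integrable (fun t => (u t i * |u t i| ^ (p - 2)) * h t i) (volume.restrict (Icc (0:ℝ) 1)) := by
    refine ((coord_int_p hp u i).add (coord_int_p hp h i)).mono' ?_ (Eventually.of_forall fun s => ?_)
    · exact ((spow_cont hp).comp_aestronglyMeasurable (coord_meas u i)).mul (coord_meas h i)
    · exact spow_mul_le hp _ _
  simpa only [mul_assoc] using this.const_mul p

lemma pair_le (hp : 1 < p) (u h : LL d p) (i : Fin d) :
    |∫ t, p * (u t i * |u t i| ^ (p - 2)) * h t i ∂(volume.restrict (Icc (0:ℝ) 1))| ≤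
      p * (‖u‖ ^ p + ‖h‖ ^ p) := by
  calc _ ≤ ∫ t, p * (|u t i| ^ p + |h t i| ^ p) ∂(volume.restrict (Icc (0:ℝ) 1)) := by
        rw [← Real.norm_eq_abs]
        refine norm_integral_le_of_norm_le (((coord_int_p hp u i).add (coord_int_p hp h i)).const_mul p)
          (Eventually.of_forall fun s => ?_)
        rw [mul_assoc, norm_mul, Real.norm_of_nonneg (by linarith : (0:ℝ) ≤ p)]
        exact mul_le_mul_of_nonneg_left (spow_mul_le hp _ _) (by linarith)
    _ ≤ _ := by
        rw [integral_const_mul, integral_add (coord_int_p hp u i) (coord_int_p hp h i)]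
        exact mul_le_mul_of_nonneg_left (add_le_add (coord_int_le hp u i) (coord_int_le hp h i)) (by linarith)

/-- the differential of the cost, as a linear map -/
def dJ (hp : 1 < p) (u : LL d p) : LL d p →ₗ[ℝ] ℝ where
  toFun h := ∑ i, ∫ t, p * (u t i * |u t i| ^ (p - 2)) * h t i ∂(volume.restrict (Icc (0:ℝ) 1))
  map_add' h k := by
    rw [← Finset.sum_add_distrib]
    refine Finset.sum_congr rfl fun i _ => ?_
    rw [← integral_add (pair_int hp u h i) (pair_int hp u k i)]
    refine integral_congr_ae ?_
    filter_upwards [Lp.coeFn_add h k] with s hs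
    rw [hs]; simp only [Pi.add_apply, PiLp.add_apply]; ring
  map_smul' c h := by
    simp only [RingHom.id_apply, smul_eq_mul]
    rw [Finset.mul_sum]
    refine Finset.sum_congr rfl fun i _ => ?_
    rw [← integral_const_mul]
    refine integral_congr_ae ?_
    filter_upwards [Lp.coeFn_smul c h] with s hs
    rw [hs]; simp only [Pi.smul_apply, PiLp.smul_apply, smul_eq_mul]; ring

lemma dJ_clm (hp : 1 < p) (C : ℝ) (hC : 0 ≤ C) : ∃ A : ℝ, ∀ u : LL d p, ‖u‖ ≤ C →
    ∃ l : LL d p →L[ℝ] ℝ, ‖l‖ ≤ A ∧ ∀ h, l h = dJ hp u h := by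
  refine ⟨d * (p * (C ^ p + 1)), fun u hu => ?_⟩
  have hp0 : 0 < p := by linarith
  have h1 : ∀ h : LL d p, ‖h‖ ≤ 1 → |dJ hp u h| ≤ d * (p * (C ^ p + 1)) := by
    intro h hh
    have e : dJ hp u h = ∑ i, ∫ t, p * (u t i * |u t i| ^ (p - 2)) * h t i ∂(volume.restrict (Icc (0:ℝ) 1)) := rfl
    rw [e]
    refine (Finset.abs_sum_le_sum_abs _ _).trans ?_
    calc _ ≤ ∑ i : Fin d, p * (C ^ p + 1) := by
          refine Finset.sum_le_sum fun i _ => (pair_le hp u h i).trans ?_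
          have a1 : ‖u‖ ^ p ≤ C ^ p := Real.rpow_le_rpow (norm_nonneg _) hu hp0.le
          have a2 : ‖h‖ ^ p ≤ 1 := Real.rpow_le_one (norm_nonneg _) hh hp0.le
          gcongr
      _ = _ := by simp
  have hA : 0 ≤ d * (p * (C ^ p + 1)) := by positivity
  have h2 : ∀ h : LL d p, ‖dJ hp u h‖ ≤ d * (p * (C ^ p + 1)) * ‖h‖ := by
    intro z
    by_cases hz0 : z = 0
    · simp [hz0]
    have hzn : 0 < ‖z‖ := norm_pos_iff.2 hz0
    have := h1 (‖z‖⁻¹ • z) (by rw [norm_smul, norm_inv, norm_norm, inv_mul_cancel₀ hzn.ne'])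
    rw [map_smul, smul_eq_mul, abs_mul, abs_of_pos (inv_pos.2 hzn), inv_mul_le_iff₀ hzn] at this
    rw [Real.norm_eq_abs]; linarith
  exact ⟨(dJ hp u).mkContinuous _ h2, LinearMap.mkContinuous_norm_le _ hA _, fun h => rfl⟩

lemma norm_p_le (hp : 1 < p) (v : EuclideanSpace ℝ (Fin d)) :
    ‖v‖ ^ p ≤ (d:ℝ) ^ p * ∑ i, |v i| ^ p := by
  have hp0 : 0 < p := by linarith
  rcases Nat.eq_zero_or_pos d with rfl | hd
  · have : v = 0 := Subsingleton.elim _ _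
    simp [this, Real.zero_rpow hp0.ne']
  have : Nonempty (Fin d) := ⟨⟨0, hd⟩⟩
  obtain ⟨j, hj⟩ := Finite.exists_max (fun i => |v i|)
  have h1 : ‖v‖ ≤ d * |v j| := by
    rw [EuclideanSpace.norm_eq, Real.sqrt_le_left (by positivity)]
    have hd1 : (1:ℝ) ≤ d := by exact_mod_cast hd
    calc _ ≤ ∑ i : Fin d, |v j| ^ 2 := by
          refine Finset.sum_le_sum fun i _ => ?_
          rw [Real.norm_eq_abs]
          exact pow_le_pow_left₀ (abs_nonneg _) (hj i) 2
      _ = d * |v j| ^ 2 := by simp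
      _ ≤ _ := by rw [mul_pow]; gcongr; nlinarith
  calc _ ≤ ((d:ℝ) * |v j|) ^ p := Real.rpow_le_rpow (norm_nonneg _) h1 hp0.le
    _ = (d:ℝ) ^ p * |v j| ^ p := Real.mul_rpow (by positivity) (abs_nonneg _)
    _ ≤ _ := by
      gcongr
      exact Finset.single_le_sum (f := fun i => |v i| ^ p) (fun i _ => by positivity) (Finset.mem_univ j)

lemma LL_mono (hp : 1 < p) : ∀ ε > 0, ∃ K : ℝ, 0 ≤ K ∧ ∀ a b : LL d p,
    ‖a - b‖ ^ p ≤ ε * (‖a‖ ^ p + ‖b‖ ^ p) + K * (dJ hp a (a - b) - dJ hp b (a - b)) := by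
  intro ε hε
  have hp0 : 0 < p := by linarith
  obtain ⟨K, hK0, hK⟩ := mono_ineq hp (ε / ((d:ℝ) ^ p * d + 1)) (by positivity)
  refine ⟨(d:ℝ) ^ p * (K / p), by positivity, fun a b => ?_⟩
  set ε' := ε / ((d:ℝ) ^ p * d + 1) with hε'
  have hε'0 : 0 < ε' := by positivity
  have hi : ∀ i : Fin d, ∫ t, |(a - b : LL d p) t i| ^ p ∂(volume.restrict (Icc (0:ℝ) 1)) ≤
      ε' * (‖a‖ ^ p + ‖b‖ ^ p) + (K / p) *
      ((∫ t, p * (a t i * |a t i| ^ (p - 2)) * (a - b : LL d p) t i ∂(volume.restrict (Icc (0:ℝ) 1))) -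
       (∫ t, p * (b t i * |b t i| ^ (p - 2)) * (a - b : LL d p) t i ∂(volume.restrict (Icc (0:ℝ) 1)))) := by
    intro i
    have i1 := ((coord_int_p hp a i).add (coord_int_p hp b i)).const_mul ε'
    have i2 := ((pair_int hp a (a - b) i).sub (pair_int hp b (a - b) i)).const_mul (K / p)
    simp only [Pi.add_apply, Pi.sub_apply] at i1 i2
    calc _ ≤ ∫ t, (ε' * (|a t i| ^ p + |b t i| ^ p) + (K / p) *
          (p * (a t i * |a t i| ^ (p - 2)) * (a - b : LL d p) t i -
            p * (b t i * |b t i| ^ (p - 2)) * (a - b : LL d p) t i)) ∂(volume.restrict (Icc (0:ℝ) 1)) := by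
          refine integral_mono_ae (coord_int_p hp _ i) (i1.add i2) ?_
          filter_upwards [Lp.coeFn_sub a b] with s hs
          have e : (a - b : LL d p) s i = a s i - b s i := by rw [hs]; rfl
          simp only [e, Pi.add_apply, Pi.sub_apply]
          refine (hK (a s i) (b s i)).trans (le_of_eq ?_)
          field_simp
      _ ≤ _ := by
          rw [integral_add i1 i2, integral_const_mul, integral_const_mul,
            integral_add (coord_int_p hp a i) (coord_int_p hp b i),
            integral_sub (pair_int hp a (a - b) i) (pair_int hp b (a - b) i)]
          have := coord_int_le hp a i
          have := coord_int_le hp b i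
          gcongr
  calc ‖a - b‖ ^ p ≤ ∫ t, (d:ℝ) ^ p * ∑ i, |(a - b : LL d p) t i| ^ p ∂(volume.restrict (Icc (0:ℝ) 1)) := by
        rw [LL_norm_p hp]
        exact integral_mono (LL_int_p hp _) ((integrable_finsetSum _ fun i _ => coord_int_p hp (a - b) i).const_mul _)
          fun s => norm_p_le hp _
    _ = (d:ℝ) ^ p * ∑ i, ∫ t, |(a - b : LL d p) t i| ^ p ∂(volume.restrict (Icc (0:ℝ) 1)) := by
        rw [integral_const_mul, integral_finsetSum _ fun i _ => coord_int_p hp (a - b) i]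
    _ ≤ (d:ℝ) ^ p * ∑ i, (ε' * (‖a‖ ^ p + ‖b‖ ^ p) + (K / p) *
      ((∫ t, p * (a t i * |a t i| ^ (p - 2)) * (a - b : LL d p) t i ∂(volume.restrict (Icc (0:ℝ) 1))) -
       (∫ t, p * (b t i * |b t i| ^ (p - 2)) * (a - b : LL d p) t i ∂(volume.restrict (Icc (0:ℝ) 1))))) := by
        gcongr with i; exact hi i
    _ = ((d:ℝ) ^ p * d * ε') * (‖a‖ ^ p + ‖b‖ ^ p) + (d:ℝ) ^ p * (K / p) * (dJ hp a (a - b) - dJ hp b (a - b)) := by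
        rw [Finset.sum_add_distrib, ← Finset.mul_sum, ← Finset.mul_sum, Finset.sum_sub_distrib]
        simp only [Finset.sum_const, Finset.card_univ, Fintype.card_fin, nsmul_eq_mul, dJ,
          LinearMap.coe_mk, AddHom.coe_mk]
        ring
    _ ≤ _ := by
        have : (d:ℝ) ^ p * d * ε' ≤ ε := by
          rw [hε', mul_div_assoc', div_le_iff₀ (by positivity)]
          nlinarith
        gcongr

lemma cauchy_of_dJ (hp : 1 < p) (C : ℝ) (v : ℕ → LL d p) (hv : ∀ k, ‖v k‖ ≤ C)
    (l : ℕ → LL d p →L[ℝ] ℝ) (hl : ∀ k h, l k h = dJ hp (v k) h) (l0 : LL d p →L[ℝ] ℝ)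
    (ht : Tendsto l atTop (𝓝 l0)) : CauchySeq v := by
  have hp0 : 0 < p := by linarith
  have hC : 0 ≤ C := (norm_nonneg _).trans (hv 0)
  rw [Metric.cauchySeq_iff]
  intro ε hε
  obtain ⟨K, hK0, hK⟩ := LL_mono (d := d) hp (ε ^ p / (4 * (C ^ p + 1))) (by positivity)
  obtain ⟨N, hN⟩ := Metric.cauchySeq_iff.1 ht.cauchySeq (ε ^ p / (4 * (K * (2 * C) + 1))) (by positivity)
  refine ⟨N, fun m hm k hk => ?_⟩
  have h1 := hK (v m) (v k)
  have h2 := hN m hm k hk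
  rw [dist_eq_norm] at h2 ⊢
  have h3 : dJ hp (v m) (v m - v k) - dJ hp (v k) (v m - v k) ≤ ε ^ p / (4 * (K * (2 * C) + 1)) * (2 * C) := by
    rw [← hl, ← hl, ← sub_apply]
    refine (le_abs_self _).trans ((l m - l k).le_of_opNorm_le_of_le h2.le ?_)
    refine (norm_sub_le _ _).trans ?_
    linarith [hv m, hv k]
  have hb : ∀ j, ‖v j‖ ^ p ≤ C ^ p := fun j => Real.rpow_le_rpow (norm_nonneg _) (hv j) hp0.le
  have hCp : 0 ≤ C ^ p := by positivity
  have hεp : 0 < ε ^ p := by positivity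
  have h4 : ε ^ p / (4 * (C ^ p + 1)) * (‖v m‖ ^ p + ‖v k‖ ^ p) ≤ ε ^ p / 2 := by
    calc _ ≤ ε ^ p / (4 * (C ^ p + 1)) * (C ^ p + C ^ p) := by
          gcongr
          · exact hv m
          · exact hv k
      _ ≤ _ := by
        rw [div_mul_eq_mul_div, div_le_div_iff₀ (by positivity) (by norm_num)]
        nlinarith
  have h5 : K * (dJ hp (v m) (v m - v k) - dJ hp (v k) (v m - v k)) ≤ ε ^ p / 4 := by
    refine (mul_le_mul_of_nonneg_left h3 hK0).trans ?_
    have : 0 ≤ K * (2 * C) := by positivity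
    rw [show K * (ε ^ p / (4 * (K * (2 * C) + 1)) * (2 * C)) = ε ^ p * (K * (2 * C)) / (4 * (K * (2 * C) + 1)) by ring,
      div_le_div_iff₀ (by positivity) (by norm_num)]
    nlinarith
  have h10 : ‖v m - v k‖ ^ p < ε ^ p := by linarith
  exact (Real.rpow_lt_rpow_iff (norm_nonneg _) hε.le hp0).1 h10

end

end

noncomputable section

lemma sys_exists {n d : ℕ}
    (X0 : EuclideanSpace ℝ (Fin n) → EuclideanSpace ℝ (Fin n))
    (X : Fin d → EuclideanSpace ℝ (Fin n) → EuclideanSpace ℝ (Fin n))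
    (hX0smooth : ContDiff ℝ (⊤ : ℕ∞) X0) (hXsmooth : ∀ i, ContDiff ℝ (⊤ : ℕ∞) (X i))
    (hX0bdd : ∃ C, ∀ y, ‖X0 y‖ ≤ C) (hXbdd : ∃ C, ∀ i y, ‖X i y‖ ≤ C)
    (hX0der : ∃ C, ∀ y, ‖fderiv ℝ X0 y‖ ≤ C)
    (hXder : ∃ C, ∀ i y, ‖fderiv ℝ (X i) y‖ ≤ C)
    (hX0der2 : ∃ C, ∀ y, ‖fderiv ℝ (fderiv ℝ X0) y‖ ≤ C)
    (hXder2 : ∃ C, ∀ i y, ‖fderiv ℝ (fderiv ℝ (X i)) y‖ ≤ C) :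
    ∃ L, SysB X0 L ∧ SysB (Bop X) L := by
  obtain ⟨a0, ha0⟩ := hX0bdd
  obtain ⟨a1, ha1⟩ := hX0der
  obtain ⟨a2, ha2⟩ := hX0der2
  obtain ⟨b0, hb0⟩ := hXbdd
  obtain ⟨b1, hb1⟩ := hXder
  obtain ⟨b2, hb2⟩ := hXder2
  have q0 := le_abs_self b0
  have q1 := le_abs_self b1
  have q2 := le_abs_self b2
  have q0' := le_abs_self a0
  have q1' := le_abs_self a1
  have q2' := le_abs_self a2
  have r0 := abs_nonneg b0
  have r1 := abs_nonneg b1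
  have r2 := abs_nonneg b2
  have r0' := abs_nonneg a0
  have r1' := abs_nonneg a1
  have r2' := abs_nonneg a2
  have h0 : SysB X0 (|a0| + |a1| + |a2|) := SysB_of_smooth hX0smooth
    (fun z => (ha0 z).trans (by linarith)) (fun z => (ha1 z).trans (by linarith))
    (fun z => (ha2 z).trans (by linarith))
  have hX : ∀ i, SysB (X i) (|b0| + |b1| + |b2|) := fun i => SysB_of_smooth (hXsmooth i)
    (fun z => (hb0 i z).trans (by linarith)) (fun z => (hb1 i z).trans (by linarith))
    (fun z => (hb2 i z).trans (by linarith))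
  have hB := Bop_sys X (by positivity) hX
  exact ⟨_, h0.mono (le_max_left _ _), hB.mono (le_max_right _ _)⟩

lemma main_core {n d : ℕ} {p : ℝ} (hp : 1 < p) [Fact (1 ≤ ENNReal.ofReal p)]
    (x : EuclideanSpace ℝ (Fin n))
    {X0 : EuclideanSpace ℝ (Fin n) → EuclideanSpace ℝ (Fin n)}
    {B : EuclideanSpace ℝ (Fin n) → EuclideanSpace ℝ (Fin d) →L[ℝ] EuclideanSpace ℝ (Fin n)}
    {L : ℝ} (h0 : SysB X0 L) (hB : SysB B L)
    (F : LL d p → EuclideanSpace ℝ (Fin n))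
    (hF : ∀ u : LL d p, ∃ γ, Traj X0 B x (⇑u) γ ∧ F u = γ 1)
    (D : LL d p → (LL d p →L[ℝ] EuclideanSpace ℝ (Fin n)))
    (hD : ∀ w, HasFDerivAt F (D w) w)
    (y : EuclideanSpace ℝ (Fin n))
    (hreg : ∀ u, F u = y → Function.Surjective (D u))
    (u : ℕ → LL d p) (hu : ∀ k, F (u k) = y) (C : ℝ) (hbdd : ∀ k, ‖u k‖ ≤ C)
    (hPS : ∀ ε > 0, ∃ K : ℕ, ∀ k ≥ K, ∀ h : LL d p, D (u k) h = 0 → ‖h‖ ≤ 1 →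
        |dJ hp (u k) h| ≤ ε) :
    ∃ (φ : ℕ → ℕ) (w : LL d p), StrictMono φ ∧ Tendsto (fun k => u (φ k)) atTop (𝓝 w) := by
  have hC : 0 ≤ C := (norm_nonneg _).trans (hbdd 0)
  obtain ⟨φ, w, hφ, hw, hweak⟩ := weak_compact hp u C hbdd
  obtain ⟨G, hG0, hG⟩ := second_diff (x := x) (p := p) hp h0 hB (C + 1) (by positivity)
  have hT : ∀ v : LL d p, ‖v‖ ≤ C → ∀ h : LL d p, ‖h‖ ≤ 1 → ‖F (v + h) - F v - D v h‖ ≤ G * ‖h‖ ^ 2 := by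
    intro v hv
    refine taylor_abs (hD v) hG0 fun h hh => ?_
    obtain ⟨γ0, t0, e0⟩ := hF v
    obtain ⟨γ1, t1, e1⟩ := hF (v + h)
    obtain ⟨γ2, t2, e2⟩ := hF (v + h + h)
    rw [e0, e1, e2]
    exact hG v h γ0 γ1 γ2 (by linarith) (by linarith) t0 t1 t2 1 h11
  have hWU : ∀ ε > 0, ∃ K, ∀ k ≥ K, ∀ h : LL d p, ‖h‖ ≤ 1 → ‖F (u (φ k) + h) - F (w + h)‖ ≤ ε := by
    intro ε hε
    obtain ⟨K, hK⟩ := weak_unif (x := x) hp h0 hB C hC (fun k => u (φ k)) w (fun k => hbdd _) hw hweak ε hε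
    refine ⟨K, fun k hk h hh => ?_⟩
    obtain ⟨γ, t1, e1⟩ := hF (u (φ k) + h)
    obtain ⟨γ', t2, e2⟩ := hF (w + h)
    rw [e1, e2]
    exact hK k hk h γ γ' hh t1 t2
  have hFw : F w = y := by
    have : ‖y - F w‖ ≤ 0 := by
      refine le_of_forall_pos_le_add fun ε hε => ?_
      obtain ⟨K, hK⟩ := hWU ε hε
      have := hK K le_rfl 0 (by simp)
      rw [add_zero, add_zero, hu] at this
      linarith
    rw [norm_le_zero_iff, sub_eq_zero] at this
    exact this.symm
  have hDc := op_conv hG0 (fun k => u (φ k)) w (fun k => hT _ (hbdd _)) (hT w hw) hWU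
  obtain ⟨A, hA⟩ := dJ_clm (d := d) hp C hC
  choose l hlA hl using fun k => hA (u (φ k)) (hbdd _)
  obtain ⟨ψ, l0, hψ, hlim⟩ := lagrange (fun k => D (u (φ k))) (D w) hDc (hreg w hFw) l A hlA (by
    intro ε hε
    obtain ⟨K, hK⟩ := hPS ε hε
    refine ⟨K, fun k hk h h1 h2 => ?_⟩
    rw [hl]
    exact hK (φ k) (hk.trans (hφ.id_le k)) h h1 h2)
  have hca := cauchy_of_dJ hp C (fun k => u (φ (ψ k))) (fun k => hbdd _) (fun k => l (ψ k))
    (fun k h => hl _ h) l0 hlim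
  obtain ⟨z, hz⟩ := cauchySeq_tendsto_of_complete hca
  exact ⟨fun k => φ (ψ k), z, hφ.comp hψ, hz⟩

end

/-- Palais–Smale: let `y` be a regular value of the endpoint map
`F(u) = γ_u(1)` (with Fréchet differential `D u` at `u`). If `F(u_k) = y` for all `k`,
the norms `‖u_k‖_p` are bounded, and the restriction of `d_{u_k}J` (where
`J(u) = Σᵢ ∫₀¹ |uᵢ|^p`, `d_uJ(h) = Σᵢ ∫₀¹ p uᵢ|uᵢ|^{p-2} hᵢ`) to the kernel of
`D (u_k)` tends to `0` in operator norm (expressed with `ε`'s), then `u_k` has a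
subsequence converging in the `L^p` norm. -/
theorem stmt17 (n d : ℕ) (p : ℝ) (hp : 1 < p) [Fact (1 ≤ ENNReal.ofReal p)]
    (x : EuclideanSpace ℝ (Fin n))
    (X0 : EuclideanSpace ℝ (Fin n) → EuclideanSpace ℝ (Fin n))
    (X : Fin d → EuclideanSpace ℝ (Fin n) → EuclideanSpace ℝ (Fin n))
    (hX0smooth : ContDiff ℝ (⊤ : ℕ∞) X0) (hXsmooth : ∀ i, ContDiff ℝ (⊤ : ℕ∞) (X i))
    (hX0bdd : ∃ C, ∀ y, ‖X0 y‖ ≤ C) (hXbdd : ∃ C, ∀ i y, ‖X i y‖ ≤ C)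
    (hX0der : ∃ C, ∀ y, ‖fderiv ℝ X0 y‖ ≤ C)
    (hXder : ∃ C, ∀ i y, ‖fderiv ℝ (X i) y‖ ≤ C)
    (hX0der2 : ∃ C, ∀ y, ‖fderiv ℝ (fderiv ℝ X0) y‖ ≤ C)
    (hXder2 : ∃ C, ∀ i y, ‖fderiv ℝ (fderiv ℝ (X i)) y‖ ≤ C)
    (F : Lp (EuclideanSpace ℝ (Fin d)) (ENNReal.ofReal p)
        (volume.restrict (Set.Icc (0:ℝ) 1)) → EuclideanSpace ℝ (Fin n))
    (hF : ∀ u : Lp (EuclideanSpace ℝ (Fin d)) (ENNReal.ofReal p)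
        (volume.restrict (Set.Icc (0:ℝ) 1)),
      ∃ γ, IsTrajectory X0 X x (⇑u) γ ∧ F u = γ 1)
    (D : Lp (EuclideanSpace ℝ (Fin d)) (ENNReal.ofReal p)
        (volume.restrict (Set.Icc (0:ℝ) 1)) →
      (Lp (EuclideanSpace ℝ (Fin d)) (ENNReal.ofReal p)
        (volume.restrict (Set.Icc (0:ℝ) 1)) →L[ℝ] EuclideanSpace ℝ (Fin n)))
    (hD : ∀ w, HasFDerivAt F (D w) w)
    (y : EuclideanSpace ℝ (Fin n))
    (hreg : ∀ u, F u = y → Function.Surjective (D u))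
    (u : ℕ → Lp (EuclideanSpace ℝ (Fin d)) (ENNReal.ofReal p)
      (volume.restrict (Set.Icc (0:ℝ) 1)))
    (hu : ∀ k, F (u k) = y)
    (hbdd : ∃ C, ∀ k, ‖u k‖ ≤ C)
    (hPS : ∀ ε > 0, ∃ K : ℕ, ∀ k ≥ K,
      ∀ h : Lp (EuclideanSpace ℝ (Fin d)) (ENNReal.ofReal p)
        (volume.restrict (Set.Icc (0:ℝ) 1)),
        D (u k) h = 0 → ‖h‖ ≤ 1 →
        |∑ i, ∫ t, p * (u k t i * |u k t i| ^ (p - 2)) * h t i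
          ∂(volume.restrict (Set.Icc (0:ℝ) 1))| ≤ ε) :
    ∃ (φ : ℕ → ℕ) (w : Lp (EuclideanSpace ℝ (Fin d)) (ENNReal.ofReal p)
        (volume.restrict (Set.Icc (0:ℝ) 1))),
      StrictMono φ ∧ Tendsto (fun k => u (φ k)) atTop (𝓝 w) := by
  obtain ⟨L, h0, hB⟩ := sys_exists X0 X hX0smooth hXsmooth hX0bdd hXbdd hX0der hXder hX0der2 hXder2
  obtain ⟨C, hC⟩ := hbdd
  refine main_core hp x h0 hB F ?_ D hD y hreg u hu C hC hPS
  intro v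
  obtain ⟨γ, ⟨hc, ht⟩, e⟩ := hF v
  refine ⟨γ, ⟨hc, fun t h => ?_⟩, e⟩
  rw [ht t h]
  simp only [Bop_apply]
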